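/- For all real numbers β with 0 < β < 1 and λ > 0 there exists a constant C > 0, depending only on n, p, α, β, λ, C₁ and C₂, with the following property: if u is a nonnegative C¹ solution of div A(x,Du) + b(x)|Du|^α ≥ q(x)g(u) in ℝⁿ and 0 < r₁ < r₂ are real numbers such that M(r₂;u) > M(r₁;u) ≥ β·M(r₂;u) and (M(r₂;u) − M(r₁;u))^{α−p+1}·(r₂ − r₁)^{p−α}·ess sup_{r₁<|x|<r₂} b(x) ≥ λ, then (M(r₂;u) − M(r₁;u))^α·ess sup_{r₁<|x|<r₂} b(x) ≥ C·(r₂ − r₁)^α·(ess inf_{r₁<|x|<r₂} q(x))·inf_{t∈(β·M(r₁;u), M(r₂;u))} g(t). -/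

import Mathlib

open MeasureTheory Metric Set Filter
open scoped RealInnerProductSpace ENNReal

noncomputable section

abbrev Euc (n : ℕ) := EuclideanSpace ℝ (Fin n)

/-- Weak solution of `div A(x,Dv) + b(x)|Dv|^α ≥ a(x)` on an open set `U`:
for every nonnegative test function `φ ∈ C₀^∞(U)`,
`-∫ A(x,Dv)·Dφ + ∫ b |Dv|^α φ ≥ ∫ a φ`. -/
def IsWeakSol {n : ℕ} (A : Euc n → Euc n → Euc n) (b : Euc n → ℝ) (α : ℝ)
    (a : Euc n → ℝ) (U : Set (Euc n)) (v : Euc n → ℝ) : Prop :=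
  ∀ φ : Euc n → ℝ, ContDiff ℝ (⊤ : ℕ∞) φ → HasCompactSupport φ → tsupport φ ⊆ U →
    (∀ x, 0 ≤ φ x) →
    (∫ x in U, a x * φ x) ≤
      (-(∫ x in U, ⟪A x (gradient v x), gradient φ x⟫)) +
        ∫ x in U, b x * ‖gradient v x‖ ^ α * φ x

/-- Structural conditions on `A`: measurability, coercivity and growth. -/
def StructCond {n : ℕ} (A : Euc n → Euc n → Euc n) (p C₁ C₂ : ℝ) : Prop :=
  Measurable (Function.uncurry A) ∧
    ∀ x ζ : Euc n, C₁ * ‖ζ‖ ^ p ≤ ⟪ζ, A x ζ⟫ ∧ ‖A x ζ‖ ≤ C₂ * ‖ζ‖ ^ (p - 1)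

/-- Locally bounded function on `ℝⁿ`. -/
def LocBdd {n : ℕ} (b : Euc n → ℝ) : Prop :=
  ∀ K : Set (Euc n), IsCompact K → ∃ C, ∀ x ∈ K, b x ≤ C

/-- `M(r; u) = max_{|x| = r} u x`. -/
def sphMax {n : ℕ} (u : Euc n → ℝ) (r : ℝ) : ℝ := sSup (u '' Metric.sphere (0 : Euc n) r)

/-- `g_θ(t) = inf_{s ∈ (t/θ, θ t)} g s`. -/
def ginf (g : ℝ → ℝ) (θ t : ℝ) : ℝ := sInf (g '' Set.Ioo (t / θ) (θ * t))

/-- The open annulus `{x : r₁ < |x| < r₂}`. -/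
def Ann (n : ℕ) (r₁ r₂ : ℝ) : Set (Euc n) := {x : Euc n | r₁ < ‖x‖ ∧ ‖x‖ < r₂}

/-- `q_σ(r) = ess inf_{r/σ < |x| < σ r} q x`. -/
def qinf {n : ℕ} (q : Euc n → ℝ) (σ r : ℝ) : ℝ :=
  essInf q (volume.restrict (Ann n (r / σ) (σ * r)))

/-- `f_σ(r) = q_σ(r) / (1 + r q_σ(r)^{(α-p+1)/α} ess sup_{r/σ<|x|<σr} b^{(p-1)/α})`. -/
def fdef {n : ℕ} (q b : Euc n → ℝ) (p α σ r : ℝ) : ℝ :=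
  qinf q σ r /
    (1 + r * qinf q σ r ^ ((α - p + 1) / α) *
      essSup (fun x => b x ^ ((p - 1) / α)) (volume.restrict (Ann n (r / σ) (σ * r))))

/-!
Truncating `u` above a level and testing with a power of the truncation gives, with the Sobolev
inequality, a maximum principle, so that `M(·; u)` is nondecreasing. Put `T = (M₂ - M₁) / (r₂ - r₁)`
and let `B` be the essential supremum of `b`. The hypothesis says that `(r₂ - r₁) T ^ (α - p + 1) B`
is at least `λ`; cutting the annulus into shells of a width `h` for which `h T ^ (α - p + 1) B` is
comparable to a small constant, one of them has `M(r + h) - M(r) ≤ T h`.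

In a ball of radius `h / 2` centred at a maximum point of `u` on the middle sphere of that shell,
subtract from `u` a paraboloid of height `2 T h`. What is left exceeds the level
`M(r + h) - (1 + β) T h` at the centre but not on the boundary. By Young's inequality `b |Du| ^ α`
is at most `B T ^ α` plus an absorbable multiple of `|Du| ^ p`, so if `q g(u)` were much larger than
`B T ^ α`, testing with truncations would show that the superlevel set at a slightly higher level
has small measure, and Stampacchia's iteration would make it empty before reaching the value at the
centre.
-/

open scoped Gradient Topology Convolution Pointwise

section Calculus

lemma hasDerivAt_posPart_rpow {s : ℝ} (hs : 1 < s) (t : ℝ) :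
    HasDerivAt (fun t : ℝ => t⁺ ^ s) (s * t⁺ ^ (s - 1)) t := by
  refine hasDerivAt_of_hasDerivAt_of_ne' (x := 0) (g := fun t => s * t⁺ ^ (s - 1))
    (fun t ht => ?_) ?_ ?_ t
  · rcases ht.lt_or_gt with ht | ht
    · have hzero : (fun t : ℝ => t⁺ ^ s) =ᶠ[𝓝 t] fun _ => 0 := by
        filter_upwards [eventually_lt_nhds ht] with y hy
        rw [posPart_eq_zero.2 hy.le, Real.zero_rpow (by linarith)]
      rw [posPart_eq_zero.2 ht.le, Real.zero_rpow (by linarith), mul_zero]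
      exact (hasDerivAt_const t 0).congr_of_eventuallyEq hzero
    · have hpow : (fun t : ℝ => t⁺ ^ s) =ᶠ[𝓝 t] fun t => t ^ s := by
        filter_upwards [eventually_gt_nhds ht] with y hy
        rw [posPart_eq_self.2 hy.le]
      rw [posPart_eq_self.2 ht.le]
      exact (Real.hasDerivAt_rpow_const (Or.inr hs.le)).congr_of_eventuallyEq hpow
  · exact (continuous_posPart.rpow_const fun _ => Or.inr (by linarith)).continuousAt
  · exact ((continuous_posPart.rpow_const fun _ => Or.inr (by linarith)).const_mul s).continuousAt

lemma contDiff_posPart_rpow {s : ℝ} (hs : 1 < s) : ContDiff ℝ 1 fun t : ℝ => t⁺ ^ s := by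
  refine contDiff_one_iff_deriv.2 ⟨fun t => (hasDerivAt_posPart_rpow hs t).differentiableAt, ?_⟩
  rw [funext fun t => (hasDerivAt_posPart_rpow hs t).deriv]
  exact (continuous_posPart.rpow_const fun _ => Or.inr (by linarith)).const_mul s

variable {F : Type*} [NormedAddCommGroup F] [InnerProductSpace ℝ F] [CompleteSpace F]

lemma norm_gradient (w : F → ℝ) (x : F) : ‖∇ w x‖ = ‖fderiv ℝ w x‖ := by
  rw [← toDual_gradient, LinearIsometryEquiv.norm_map]

lemma continuous_gradient {w : F → ℝ} (hw : ContDiff ℝ 1 w) : Continuous (∇ w) :=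
  (InnerProductSpace.toDual ℝ F).symm.continuous.comp (hw.continuous_fderiv one_ne_zero)

lemma gradient_eq_zero_of_notMem_tsupport {w : F → ℝ} {x : F} (hx : x ∉ tsupport w) :
    ∇ w x = 0 := by
  rw [← norm_eq_zero, norm_gradient, norm_eq_zero]
  exact Function.notMem_support.1 fun h => hx (support_fderiv_subset ℝ h)

lemma hasCompactSupport_gradient {w : F → ℝ} (hw : HasCompactSupport w) :
    HasCompactSupport (∇ w) :=
  HasCompactSupport.intro hw.isCompact fun _ => gradient_eq_zero_of_notMem_tsupport

end Calculus

section YoungInequalities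

variable {p a f : ℝ}

lemma rpow_eq_mul_rpow_sub_one (hp : p ≠ 0) (ha : 0 ≤ a) : a ^ p = a * a ^ (p - 1) := by
  rw [← Real.rpow_one_add' ha (by simpa using hp), add_sub_cancel]

lemma mul_rpow_sub_one_le_mul_rpow_add {C D : ℝ} (hC : 0 < C) (hD : 0 ≤ D) (hp : 1 ≤ p)
    (ha : 0 ≤ a) (hf : 0 ≤ f) :
    D * f * a ^ (p - 1) ≤ C * a ^ p + D * (D / C) ^ (p - 1) * f ^ p := by
  have hsplit : ∀ t : ℝ, 0 ≤ t → t ^ p = t * t ^ (p - 1) := fun _ =>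
    rpow_eq_mul_rpow_sub_one (by linarith)
  rcases le_total (D * f) (C * a) with h | h
  · calc D * f * a ^ (p - 1) ≤ C * a * a ^ (p - 1) := by gcongr
      _ = C * a ^ p := by rw [hsplit a ha, mul_assoc]
      _ ≤ _ := le_add_of_nonneg_right (by positivity)
  · have hle : a ≤ D / C * f := by rw [div_mul_eq_mul_div, le_div_iff₀ hC]; linarith
    calc D * f * a ^ (p - 1) ≤ D * f * (D / C * f) ^ (p - 1) := by gcongr
      _ = D * (D / C) ^ (p - 1) * f ^ p := by
        rw [Real.mul_rpow (by positivity) hf, hsplit f hf]; ring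
      _ ≤ _ := le_add_of_nonneg_left (by positivity)

lemma rpow_sub_one_mul_le_rpow_add_rpow (hp : 1 ≤ p) (ha : 0 ≤ a) (hf : 0 ≤ f) :
    f ^ (p - 1) * a ≤ f ^ p + a ^ p := by
  have hsplit : ∀ t : ℝ, 0 ≤ t → t ^ p = t * t ^ (p - 1) := fun _ =>
    rpow_eq_mul_rpow_sub_one (by linarith)
  rcases le_total a f with h | h
  · calc f ^ (p - 1) * a ≤ f ^ (p - 1) * f := by gcongr
      _ = f ^ p := by rw [hsplit f hf, mul_comm]
      _ ≤ _ := le_add_of_nonneg_right (by positivity)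
  · calc f ^ (p - 1) * a ≤ a ^ (p - 1) * a := by gcongr
      _ = a ^ p := by rw [hsplit a ha, mul_comm]
      _ ≤ _ := le_add_of_nonneg_left (by positivity)

lemma rpow_le_rpow_add_mul_rpow {α T : ℝ} (hT : 0 < T) (hα : 0 ≤ α) (hαp : α ≤ p) (ha : 0 ≤ a) :
    a ^ α ≤ T ^ α + T ^ (α - p) * a ^ p := by
  rcases le_total a T with h | h
  · exact (Real.rpow_le_rpow ha h hα).trans (le_add_of_nonneg_right (by positivity))
  · have ha' : 0 < a := hT.trans_le h
    calc a ^ α = a ^ (α - p) * a ^ p := by rw [← Real.rpow_add ha', sub_add_cancel]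
      _ ≤ T ^ (α - p) * a ^ p := by
        gcongr ?_ * _
        exact Real.rpow_le_rpow_of_nonpos hT h (by linarith)
      _ ≤ _ := le_add_of_nonneg_left (by positivity)

end YoungInequalities

section WeakInequality

variable {E : Type*} [NormedAddCommGroup E] [InnerProductSpace ℝ E] [FiniteDimensional ℝ E]
  [MeasurableSpace E] [BorelSpace E]

lemma exists_dist_normed_convolution_le {G : Type*} [NormedAddCommGroup G] [NormedSpace ℝ G]
    [CompleteSpace G] {f : E → G} (hf : Continuous f) (hfc : HasCompactSupport f) {ε : ℝ}
    (hε : 0 < ε) :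
    ∃ d > 0, ∀ B : ContDiffBump (0 : E), B.rOut ≤ d → ∀ x,
      dist ((B.normed volume ⋆[ContinuousLinearMap.lsmul ℝ ℝ, volume] f) x) (f x) ≤ ε := by
  obtain ⟨d, hd, hfd⟩ :=
    Metric.uniformContinuous_iff.1 (hfc.uniformContinuous_of_continuous hf) ε hε
  exact ⟨d, hd, fun B hB x => B.dist_normed_convolution_le hf.aestronglyMeasurable
    fun y hy => (hfd ((mem_ball.1 hy).trans_le hB)).le⟩

lemma fderiv_normed_convolution {φ : E → ℝ} (hφ : ContDiff ℝ 1 φ) (hφc : HasCompactSupport φ)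
    (B : ContDiffBump (0 : E)) (x : E) :
    fderiv ℝ (B.normed volume ⋆[ContinuousLinearMap.lsmul ℝ ℝ, volume] φ) x =
      (B.normed volume ⋆[ContinuousLinearMap.lsmul ℝ ℝ, volume] fderiv ℝ φ) x :=
  (hφc.hasFDerivAt_convolution_right _ B.continuous_normed.locallyIntegrable hφ x).fderiv

lemma exists_smooth_approx {φ : E → ℝ} (hφ : ContDiff ℝ 1 φ) (hφc : HasCompactSupport φ)
    (hφ₀ : ∀ x, 0 ≤ φ x) {ε : ℝ} (hε : 0 < ε) :
    ∃ ψ : E → ℝ, ContDiff ℝ (⊤ : ℕ∞) ψ ∧ (∀ x, 0 ≤ ψ x) ∧ tsupport ψ ⊆ cthickening 1 (tsupport φ) ∧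
      (∀ x, ‖ψ x - φ x‖ ≤ ε) ∧ ∀ x, ‖∇ ψ x - ∇ φ x‖ ≤ ε := by
  obtain ⟨d₀, hd₀, hdist⟩ := exists_dist_normed_convolution_le hφ.continuous hφc hε
  obtain ⟨d₁, hd₁, hdist'⟩ := exists_dist_normed_convolution_le
    (hφ.continuous_fderiv one_ne_zero) (hφc.fderiv (𝕜 := ℝ)) hε
  set d := min 1 (min d₀ d₁)
  have hd : 0 < d := by positivity
  let B : ContDiffBump (0 : E) := ⟨d / 2, d, half_pos hd, half_lt_self hd⟩
  refine ⟨B.normed volume ⋆[ContinuousLinearMap.lsmul ℝ ℝ, volume] φ,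
    B.hasCompactSupport_normed.contDiff_convolution_left _ B.contDiff_normed
      hφ.continuous.locallyIntegrable,
    fun x => integral_nonneg fun t => mul_nonneg (B.nonneg_normed t) (hφ₀ _),
    closure_minimal ?_ isClosed_cthickening,
    fun x => ?_, fun x => ?_⟩
  · refine (support_convolution_subset _).trans ?_
    rw [B.support_normed_eq, ball_add_zero]
    exact (thickening_subset_cthickening_of_le (min_le_left _ _) _).trans
      (cthickening_subset_of_subset 1 (subset_tsupport φ))
  · simpa only [dist_eq_norm] using
      hdist B ((min_le_right _ _).trans (min_le_left _ _)) x
  · rw [gradient, gradient, ← map_sub, LinearIsometryEquiv.norm_map,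
      fderiv_normed_convolution hφ hφc, ← dist_eq_norm]
    exact hdist' B ((min_le_right _ _).trans (min_le_right _ _)) x

lemma integrable_inner_of_hasCompactSupport {V χ : E → E} (hV : LocallyIntegrable V)
    (hχ : Continuous χ) (hχc : HasCompactSupport χ) : Integrable fun x => ⟪V x, χ x⟫ := by
  refine (LocallyIntegrable.integrable_smul_left_of_hasCompactSupport
    (fun x => (hV x).norm) hχ.norm hχc.norm).mono'
    (hV.aestronglyMeasurable.inner hχ.aestronglyMeasurable) (.of_forall fun x => ?_)
  rw [smul_eq_mul, mul_comm]
  exact norm_inner_le_norm _ _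

lemma norm_integral_le_mul_setIntegral_norm {G : Type*} [NormedAddCommGroup G] {V : E → G}
    {F : E → ℝ} {K : Set E} {ε : ℝ} (hV : LocallyIntegrable V) (hK : IsCompact K)
    (hF : ∀ x, ‖F x‖ ≤ ε * ‖V x‖) (hF₀ : ∀ x ∉ K, F x = 0) :
    ‖∫ x, F x‖ ≤ ε * ∫ x in K, ‖V x‖ := by
  rw [← setIntegral_eq_integral_of_forall_compl_eq_zero hF₀, ← integral_const_mul]
  exact norm_integral_le_of_norm_le ((hV.integrableOn_isCompact hK).norm.const_mul ε)
    (.of_forall hF)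

/-- The inequality `div V + c ≥ 0` in the sense of distributions, for a locally integrable vector
field `V` and a locally integrable function `c`. -/
structure DivAddNonneg (V : E → E) (c : E → ℝ) : Prop where
  locallyIntegrable_field : LocallyIntegrable V
  locallyIntegrable_term : LocallyIntegrable c
  integral_inner_gradient_le_of_smooth : ∀ ψ : E → ℝ, ContDiff ℝ (⊤ : ℕ∞) ψ → HasCompactSupport ψ →
    (∀ x, 0 ≤ ψ x) → ∫ x, ⟪V x, ∇ ψ x⟫ ≤ ∫ x, c x * ψ x

namespace DivAddNonneg

variable {V : E → E} {c φ : E → ℝ}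

lemma integrable_inner_gradient (h : DivAddNonneg V c) (hφ : ContDiff ℝ 1 φ)
    (hφc : HasCompactSupport φ) : Integrable fun x => ⟪V x, ∇ φ x⟫ :=
  integrable_inner_of_hasCompactSupport h.locallyIntegrable_field (continuous_gradient hφ)
    (hasCompactSupport_gradient hφc)

lemma integrable_mul (h : DivAddNonneg V c) (hφ : ContDiff ℝ 1 φ) (hφc : HasCompactSupport φ) :
    Integrable fun x => c x * φ x := by
  simpa only [smul_eq_mul, mul_comm] using
    h.locallyIntegrable_term.integrable_smul_left_of_hasCompactSupport hφ.continuous hφc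

theorem integral_inner_gradient_le (h : DivAddNonneg V c) (hφ : ContDiff ℝ 1 φ)
    (hφc : HasCompactSupport φ) (hφ₀ : ∀ x, 0 ≤ φ x) :
    ∫ x, ⟪V x, ∇ φ x⟫ ≤ ∫ x, c x * φ x := by
  set K := cthickening 1 (tsupport φ)
  have hK : IsCompact K := hφc.isCompact.cthickening
  have hφK : tsupport φ ⊆ K := self_subset_cthickening _
  set I := (∫ x in K, ‖V x‖) + ∫ x in K, ‖c x‖ with hI_def
  have : 0 ≤ I := by positivity
  refine le_of_forall_pos_le_add fun e he => ?_
  obtain ⟨ψ, hψ, hψ₀, hψK, hdist, hdist'⟩ :=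
    exists_smooth_approx hφ hφc hφ₀ (show 0 < e / (I + 1) by positivity)
  have hψc : HasCompactSupport ψ := HasCompactSupport.of_support_subset_isCompact hK
    ((subset_tsupport ψ).trans hψK)
  have hψ₁ : ContDiff ℝ 1 ψ := hψ.of_le (by exact_mod_cast le_top)
  have hfield := norm_integral_le_mul_setIntegral_norm
    (F := fun x => ⟪V x, ∇ ψ x - ∇ φ x⟫) (ε := e / (I + 1)) h.locallyIntegrable_field hK
    (fun x => (norm_inner_le_norm _ _).trans (by rw [mul_comm]; gcongr; exact hdist' x))
    (fun x hx => by rw [gradient_eq_zero_of_notMem_tsupport (fun h => hx (hψK h)),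
      gradient_eq_zero_of_notMem_tsupport (fun h => hx (hφK h)), sub_zero, inner_zero_right])
  have hterm := norm_integral_le_mul_setIntegral_norm
    (F := fun x => c x * (ψ x - φ x)) (ε := e / (I + 1)) h.locallyIntegrable_term hK
    (fun x => (norm_mul_le _ _).trans (by rw [mul_comm]; gcongr; exact hdist x))
    (fun x hx => by rw [image_eq_zero_of_notMem_tsupport (fun h => hx (hψK h)),
      image_eq_zero_of_notMem_tsupport (fun h => hx (hφK h)), sub_zero, mul_zero])
  simp only [inner_sub_right, mul_sub] at hfield hterm
  rw [integral_sub (h.integrable_inner_gradient hψ₁ hψc) (h.integrable_inner_gradient hφ hφc),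
    Real.norm_eq_abs, abs_le] at hfield
  rw [integral_sub (h.integrable_mul hψ₁ hψc) (h.integrable_mul hφ hφc),
    Real.norm_eq_abs, abs_le] at hterm
  have hsmall : e / (I + 1) * (∫ x in K, ‖V x‖) + e / (I + 1) * ∫ x in K, ‖c x‖ ≤ e := by
    rw [← mul_add, ← hI_def, div_mul_eq_mul_div, div_le_iff₀ (by positivity)]
    nlinarith
  linarith [h.integral_inner_gradient_le_of_smooth ψ hψ hψc hψ₀]

end DivAddNonneg

end WeakInequality

section Truncation

section TopologicalSpace

variable {X : Type*} {Ω : Set X} {U : X → ℝ} {k s : ℝ}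

/-- The power `((U - k)⁺) ^ s` of the part of `U` above the level `k`, extended by zero outside
`Ω`. When `U < k` on the boundary of `Ω`, it is an admissible test function for every `s > 1`. -/
def truncPow (Ω : Set X) (U : X → ℝ) (k s : ℝ) : X → ℝ :=
  Ω.indicator fun x => (U x - k)⁺ ^ s

lemma truncPow_nonneg (x : X) : 0 ≤ truncPow Ω U k s x :=
  indicator_nonneg (fun _ _ => by positivity) x

lemma truncPow_of_mem {x : X} (hx : x ∈ Ω) : truncPow Ω U k s x = (U x - k)⁺ ^ s :=
  indicator_of_mem hx _

lemma truncPow_of_le (hs : s ≠ 0) {x : X} (hx : U x ≤ k) : truncPow Ω U k s x = 0 :=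
  indicator_apply_eq_zero.2 fun _ => by
    rw [posPart_eq_zero.2 (sub_nonpos.2 hx), Real.zero_rpow hs]

variable [TopologicalSpace X]

lemma truncPow_eventuallyEq_of_mem (hΩ : IsOpen Ω) {x : X} (hx : x ∈ Ω) :
    truncPow Ω U k s =ᶠ[𝓝 x] fun y => (U y - k)⁺ ^ s := by
  filter_upwards [hΩ.mem_nhds hx] with y hy using truncPow_of_mem hy

lemma truncPow_eventuallyEq_of_notMem (hU : Continuous U) (hs : s ≠ 0)
    (hk : ∀ x ∈ frontier Ω, U x < k) {x : X} (hx : x ∉ Ω) :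
    truncPow Ω U k s =ᶠ[𝓝 x] fun _ => 0 := by
  by_cases hcl : x ∈ closure Ω
  · have hxk : U x < k := hk x ⟨hcl, fun h => hx (interior_subset h)⟩
    filter_upwards [hU.continuousAt.eventually_lt_const hxk] with y hy
      using truncPow_of_le hs hy.le
  · filter_upwards [isClosed_closure.isOpen_compl.mem_nhds hcl] with y hy
      using indicator_of_notMem (fun h => hy (subset_closure h)) _

end TopologicalSpace

variable {E : Type*} [NormedAddCommGroup E] [InnerProductSpace ℝ E]
  {Ω : Set E} {U : E → ℝ} {k s : ℝ}

lemma contDiff_truncPow (hΩ : IsOpen Ω) (hU : ContDiff ℝ 1 U) (hs : 1 < s)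
    (hk : ∀ x ∈ frontier Ω, U x < k) : ContDiff ℝ 1 (truncPow Ω U k s) := by
  refine contDiff_iff_contDiffAt.2 fun x => ?_
  by_cases hx : x ∈ Ω
  · exact ((contDiff_posPart_rpow hs).comp (hU.sub contDiff_const)).contDiffAt.congr_of_eventuallyEq
      (truncPow_eventuallyEq_of_mem hΩ hx)
  · exact contDiffAt_const.congr_of_eventuallyEq
      (truncPow_eventuallyEq_of_notMem hU.continuous (by linarith) hk hx)

lemma gradient_truncPow [CompleteSpace E] (hΩ : IsOpen Ω) (hU : ContDiff ℝ 1 U) (hs : 1 < s)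
    (hk : ∀ x ∈ frontier Ω, U x < k) :
    ∇ (truncPow Ω U k s) = Ω.indicator fun x => (s * (U x - k)⁺ ^ (s - 1)) • ∇ U x := by
  ext1 x
  by_cases hx : x ∈ Ω
  · rw [indicator_of_mem hx]
    refine HasGradientAt.gradient (hasGradientAt_iff_hasFDerivAt.2 ?_)
    rw [map_smul, toDual_gradient]
    exact ((hasDerivAt_posPart_rpow hs (U x - k)).comp_hasFDerivAt x
      ((hU.differentiable one_ne_zero x).hasFDerivAt.sub_const k)).congr_of_eventuallyEq
      (truncPow_eventuallyEq_of_mem hΩ hx)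
  · rw [indicator_of_notMem hx, (truncPow_eventuallyEq_of_notMem hU.continuous
      (by linarith : s ≠ 0) hk hx).gradient_eq, gradient_fun_const]

variable [FiniteDimensional ℝ E]

lemma hasCompactSupport_truncPow (hb : Bornology.IsBounded Ω) :
    HasCompactSupport (truncPow Ω U k s) :=
  HasCompactSupport.of_support_subset_isCompact hb.isCompact_closure
    (support_indicator_subset.trans subset_closure)

variable [MeasurableSpace E] [BorelSpace E] {V : E → E} {c : E → ℝ}

lemma integrableOn_of_continuous_of_isBounded {F : E → ℝ} (hF : Continuous F)
    (hb : Bornology.IsBounded Ω) : IntegrableOn F Ω :=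
  (hF.continuousOn.integrableOn_compact hb.isCompact_closure).mono_set subset_closure

lemma integrableOn_posPart_rpow (hU : Continuous U) (hb : Bornology.IsBounded Ω) (hs : 0 ≤ s) :
    IntegrableOn (fun x => (U x - k)⁺ ^ s) Ω :=
  integrableOn_of_continuous_of_isBounded
    ((continuous_posPart.comp (hU.sub continuous_const)).rpow_const fun _ => Or.inr hs) hb

lemma integrableOn_posPart_rpow_mul_norm_gradient {u : E → ℝ} (hU : Continuous U)
    (hu : ContDiff ℝ 1 u) (hb : Bornology.IsBounded Ω) (hs : 0 ≤ s) :
    IntegrableOn (fun x => (U x - k)⁺ ^ s * ‖∇ u x‖) Ω :=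
  integrableOn_of_continuous_of_isBounded
    (((continuous_posPart.comp (hU.sub continuous_const)).rpow_const fun _ => Or.inr hs).mul
      (continuous_gradient hu).norm) hb

lemma integrableOn_posPart_mul_norm_gradient_rpow {u : E → ℝ} (hU : Continuous U)
    (hu : ContDiff ℝ 1 u) (hb : Bornology.IsBounded Ω) (hs : 0 ≤ s) :
    IntegrableOn (fun x => (U x - k)⁺ * ‖∇ u x‖ ^ s) Ω :=
  integrableOn_of_continuous_of_isBounded
    ((continuous_posPart.comp (hU.sub continuous_const)).mul
      ((continuous_gradient hu).norm.rpow_const fun _ => Or.inr hs)) hb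

lemma integral_norm_gradient_truncPow (hΩ : IsOpen Ω) (hU : ContDiff ℝ 1 U) (hs : 1 < s)
    (hk : ∀ x ∈ frontier Ω, U x < k) :
    ∫ x, ‖∇ (truncPow Ω U k s) x‖ = ∫ x in Ω, s * (U x - k)⁺ ^ (s - 1) * ‖∇ U x‖ := by
  rw [← integral_indicator hΩ.measurableSet]
  congr 1 with x
  rw [gradient_truncPow hΩ hU hs hk, norm_indicator_eq_indicator_norm]
  refine congr_arg (Ω.indicator · x) (funext fun y => ?_)
  rw [norm_smul, Real.norm_of_nonneg (by positivity)]

/-- The outcome of testing `div V + c ≥ 0` with the square of a truncation. -/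
theorem DivAddNonneg.setIntegral_truncation (h : DivAddNonneg V c) (hΩ : IsOpen Ω)
    (hb : Bornology.IsBounded Ω) (hU : ContDiff ℝ 1 U) (hk : ∀ x ∈ frontier Ω, U x < k) :
    IntegrableOn (fun x => c x * (U x - k)⁺ ^ 2 - 2 * (U x - k)⁺ * ⟪V x, ∇ U x⟫) Ω ∧
      0 ≤ ∫ x in Ω, (c x * (U x - k)⁺ ^ 2 - 2 * (U x - k)⁺ * ⟪V x, ∇ U x⟫) := by
  have hφ := contDiff_truncPow hΩ hU one_lt_two hk
  have hφc := hasCompactSupport_truncPow (U := U) (k := k) (s := 2) hb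
  have hint := (h.integrable_mul hφ hφc).sub (h.integrable_inner_gradient hφ hφc)
  have heq : (fun x => c x * truncPow Ω U k 2 x - ⟪V x, ∇ (truncPow Ω U k 2) x⟫) =
      Ω.indicator fun x => c x * (U x - k)⁺ ^ 2 - 2 * (U x - k)⁺ * ⟪V x, ∇ U x⟫ := by
    ext1 x
    rw [gradient_truncPow hΩ hU one_lt_two hk]
    by_cases hx : x ∈ Ω
    · simp only [truncPow, indicator_of_mem hx, inner_smul_right, Real.rpow_two,
        show (2 : ℝ) - 1 = 1 by norm_num, Real.rpow_one]
    · simp only [truncPow, indicator_of_notMem hx, mul_zero, inner_zero_right, sub_zero]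
  rw [← integrable_indicator_iff hΩ.measurableSet, ← integral_indicator hΩ.measurableSet, ← heq,
    integral_sub (h.integrable_mul hφ hφc) (h.integrable_inner_gradient hφ hφc)]
  exact ⟨hint, sub_nonneg.2 (h.integral_inner_gradient_le hφ hφc truncPow_nonneg)⟩

end Truncation

section Superlevel

/-- The part of `Ω` on which `U` exceeds the level `k`. -/
def superlevel {X : Type*} (Ω : Set X) (U : X → ℝ) (k : ℝ) : Set X := {x ∈ Ω | k < U x}

lemma superlevel_subset {X : Type*} (Ω : Set X) (U : X → ℝ) (k : ℝ) : superlevel Ω U k ⊆ Ω :=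
  sep_subset _ _

lemma superlevel_anti {X : Type*} (Ω : Set X) (U : X → ℝ) : Antitone (superlevel Ω U) :=
  fun _ _ hkl _ hx => ⟨hx.1, hkl.trans_lt hx.2⟩

lemma isOpen_superlevel {X : Type*} [TopologicalSpace X] {Ω : Set X} (hΩ : IsOpen Ω) {U : X → ℝ}
    (hU : Continuous U) (k : ℝ) : IsOpen (superlevel Ω U k) :=
  hΩ.inter (isOpen_lt continuous_const hU)

variable {E : Type*} [NormedAddCommGroup E] [InnerProductSpace ℝ E] [FiniteDimensional ℝ E]
  [MeasurableSpace E] [BorelSpace E] {Ω : Set E} {U : E → ℝ} {k s : ℝ}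

lemma measure_superlevel_ne_top (hb : Bornology.IsBounded Ω) :
    volume (superlevel Ω U k) ≠ ∞ :=
  (hb.subset (superlevel_subset Ω U k)).measure_lt_top.ne

variable (E) in
/-- The constant of the Sobolev inequality between `L¹` norms of gradients and `L^(n/(n-1))` norms,
`n` being the dimension of `E`. -/
def sobolevConst : ℝ :=
  eLpNormLESNormFDerivOneConst (volume : Measure E)
    (NNReal.conjExponent (Module.finrank ℝ E) : NNReal)

variable (E) in
lemma sobolevConst_nonneg : 0 ≤ sobolevConst E := NNReal.coe_nonneg _

/-- The Sobolev inequality, combined with the Hölder inequality on `Z`. -/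
theorem setIntegral_norm_le_sobolevConst_mul (hn : 1 < Module.finrank ℝ E) {w : E → ℝ}
    (hw : ContDiff ℝ 1 w) (hwc : HasCompactSupport w) {Z : Set E} (hZ : volume Z ≠ ∞) :
    ∫ x in Z, ‖w x‖ ≤
      sobolevConst E * volume.real Z ^ (Module.finrank ℝ E : ℝ)⁻¹ * ∫ x, ‖∇ w x‖ := by
  set κ : NNReal := NNReal.conjExponent (Module.finrank ℝ E)
  have hκ : NNReal.HolderConjugate (Module.finrank ℝ E) κ :=
    NNReal.HolderConjugate.conjExponent (by exact_mod_cast hn)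
  have hexp : (1 : ℝ) - 1 / κ = (Module.finrank ℝ E : ℝ)⁻¹ := by
    have := hκ.coe.inv_add_inv_eq_one
    push_cast at this
    rw [one_div, ← this, add_sub_cancel_right]
  have hgrad : Integrable (fderiv ℝ w) :=
    (hw.continuous_fderiv one_ne_zero).integrable_of_hasCompactSupport (hwc.fderiv (𝕜 := ℝ))
  have hholder : eLpNorm w 1 (volume.restrict Z) ≤
      eLpNormLESNormFDerivOneConst (volume : Measure E) κ * eLpNorm (fderiv ℝ w) 1 volume *
        volume Z ^ (Module.finrank ℝ E : ℝ)⁻¹ := by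
    refine (eLpNorm_le_eLpNorm_mul_rpow_measure_univ (q := κ)
      (by exact_mod_cast hκ.symm.lt.le) hw.continuous.aestronglyMeasurable).trans ?_
    rw [Measure.restrict_apply_univ, ENNReal.toReal_one, ENNReal.coe_toReal, div_one, hexp]
    gcongr
    exact (eLpNorm_restrict_le _ _ _ _).trans (eLpNorm_le_eLpNorm_fderiv_one volume hw hwc hκ)
  simp only [eLpNorm_one_eq_lintegral_enorm] at hholder
  have htop : ∫⁻ x, ‖fderiv ℝ w x‖ₑ ≠ ∞ := hgrad.2.ne
  have hreal := ENNReal.toReal_mono (by finiteness) hholder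
  rw [ENNReal.toReal_mul, ENNReal.toReal_mul, ENNReal.coe_toReal, ← ENNReal.toReal_rpow,
    ← integral_norm_eq_lintegral_enorm hgrad.1,
    ← integral_norm_eq_lintegral_enorm hw.continuous.aestronglyMeasurable] at hreal
  simp only [norm_gradient]
  calc _ ≤ _ := hreal
    _ = _ := by rw [mul_right_comm]; rfl

lemma rpow_mul_measureReal_superlevel_le_setIntegral (hΩ : IsOpen Ω) (hb : Bornology.IsBounded Ω)
    (hU : Continuous U) (hs : 0 ≤ s) {d : ℝ} (hd : 0 ≤ d) :
    d ^ s * volume.real (superlevel Ω U (k + d)) ≤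
      ∫ x in superlevel Ω U k, (U x - k)⁺ ^ s := by
  have hint : IntegrableOn (fun x => (U x - k)⁺ ^ s) (superlevel Ω U k) :=
    (integrableOn_posPart_rpow hU hb hs).mono_set (superlevel_subset Ω U k)
  have hsub : superlevel Ω U (k + d) ⊆ superlevel Ω U k := superlevel_anti Ω U (by linarith)
  calc d ^ s * volume.real (superlevel Ω U (k + d))
      = ∫ _ in superlevel Ω U (k + d), d ^ s := by
        rw [setIntegral_const, smul_eq_mul, mul_comm]
    _ ≤ ∫ x in superlevel Ω U (k + d), (U x - k)⁺ ^ s :=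
        setIntegral_mono_on (integrableOn_const (measure_superlevel_ne_top hb))
          (hint.mono_set hsub) (isOpen_superlevel hΩ hU _).measurableSet fun x hx =>
          Real.rpow_le_rpow hd ((by linarith [hx.2] : d ≤ U x - k).trans (le_posPart _)) hs
    _ ≤ _ := setIntegral_mono_set hint (.of_forall fun x => by positivity) hsub.eventuallyLE

theorem rpow_mul_measureReal_superlevel_le (hn : 1 < Module.finrank ℝ E) (hΩ : IsOpen Ω)
    (hb : Bornology.IsBounded Ω) (hU : ContDiff ℝ 1 U) (hs : 1 < s)
    (hk : ∀ x ∈ frontier Ω, U x < k) {d : ℝ} (hd : 0 ≤ d) :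
    d ^ s * volume.real (superlevel Ω U (k + d)) ≤
      sobolevConst E * volume.real (superlevel Ω U k) ^ (Module.finrank ℝ E : ℝ)⁻¹ *
        ∫ x, ‖∇ (truncPow Ω U k s) x‖ := by
  calc d ^ s * volume.real (superlevel Ω U (k + d))
      ≤ ∫ x in superlevel Ω U k, (U x - k)⁺ ^ s :=
        rpow_mul_measureReal_superlevel_le_setIntegral hΩ hb hU.continuous (by linarith) hd
    _ = ∫ x in superlevel Ω U k, ‖truncPow Ω U k s x‖ :=
        setIntegral_congr_fun (isOpen_superlevel hΩ hU.continuous k).measurableSet fun x hx => by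
          rw [Real.norm_of_nonneg (truncPow_nonneg x), truncPow_of_mem hx.1]
    _ ≤ _ := setIntegral_norm_le_sobolevConst_mul hn (contDiff_truncPow hΩ hU hs hk)
        (hasCompactSupport_truncPow hb) (measure_superlevel_ne_top hb)

end Superlevel

section MaximumPrinciple

variable {E : Type*} [NormedAddCommGroup E] [InnerProductSpace ℝ E] [FiniteDimensional ℝ E]

/-- The points of `Ω` at which `u` exceeds the level `k` and is not critical. -/
def noncriticalSuperlevel (Ω : Set E) (u : E → ℝ) (k : ℝ) : Set E :=
  superlevel Ω u k ∩ {x | ∇ u x ≠ 0}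

variable {Ω : Set E} {u : E → ℝ} {k m : ℝ}

lemma isOpen_noncriticalSuperlevel (hΩ : IsOpen Ω) (hu : ContDiff ℝ 1 u) :
    IsOpen (noncriticalSuperlevel Ω u k) :=
  (isOpen_superlevel hΩ hu.continuous k).inter
    (isOpen_ne_fun (continuous_gradient hu) continuous_const)

lemma noncriticalSuperlevel_subset : noncriticalSuperlevel Ω u k ⊆ Ω :=
  inter_subset_left.trans (superlevel_subset Ω u k)

lemma posPart_eq_zero_or_gradient_eq_zero {x : E} (hx : x ∈ Ω)
    (hxZ : x ∉ noncriticalSuperlevel Ω u k) : (u x - k)⁺ = 0 ∨ ∇ u x = 0 := by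
  by_contra! h
  exact hxZ ⟨⟨hx, by simpa [posPart_eq_zero] using h.1⟩, h.2⟩

lemma truncation_integrand_le {V : E → E} {c : E → ℝ} {p C₁ B : ℝ} {x : E}
    (hp : 1 < p) (hC₁ : 0 < C₁) (hB : 0 ≤ B) (hx : x ∈ Ω)
    (hV : C₁ * ‖∇ u x‖ ^ p ≤ ⟪V x, ∇ u x⟫) (hc : c x ≤ B * ‖∇ u x‖ ^ (p - 1)) :
    c x * (u x - k)⁺ ^ 2 - 2 * (u x - k)⁺ * ⟪V x, ∇ u x⟫ ≤
      B * (B / C₁) ^ (p - 1) *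
        (noncriticalSuperlevel Ω u k).indicator (fun x => (u x - k)⁺ ^ (p + 1)) x -
          C₁ * ((u x - k)⁺ * ‖∇ u x‖ ^ p) := by
  have hf : 0 ≤ (u x - k)⁺ := posPart_nonneg _
  by_cases hxZ : x ∈ noncriticalSuperlevel Ω u k
  · have hyoung := mul_rpow_sub_one_le_mul_rpow_add hC₁ hB hp.le (norm_nonneg (∇ u x)) hf
    have hterm := mul_le_mul_of_nonneg_right hc (sq_nonneg (u x - k)⁺)
    rw [indicator_of_mem hxZ, Real.rpow_add_one' hf (by linarith)]
    nlinarith [mul_le_mul_of_nonneg_left hyoung hf, mul_le_mul_of_nonneg_left hV hf]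
  · rw [indicator_of_notMem hxZ]
    rcases posPart_eq_zero_or_gradient_eq_zero hx hxZ with h₀ | h₀
    · simp [h₀]
    · rw [h₀, norm_zero, Real.zero_rpow (by linarith), mul_zero] at hc
      rw [h₀, inner_zero_right, norm_zero, Real.zero_rpow (by linarith)]
      nlinarith [sq_nonneg (u x - k)⁺]

lemma posPart_rpow_mul_norm_gradient_le {p : ℝ} {x : E} (hp : 1 < p) (hx : x ∈ Ω) :
    (u x - k)⁺ ^ p * ‖∇ u x‖ ≤
      (noncriticalSuperlevel Ω u k).indicator (fun x => (u x - k)⁺ ^ (p + 1)) x +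
        (u x - k)⁺ * ‖∇ u x‖ ^ p := by
  have hf : 0 ≤ (u x - k)⁺ := posPart_nonneg _
  by_cases hxZ : x ∈ noncriticalSuperlevel Ω u k
  · calc (u x - k)⁺ ^ p * ‖∇ u x‖
        = (u x - k)⁺ * ((u x - k)⁺ ^ (p - 1) * ‖∇ u x‖) := by
          rw [rpow_eq_mul_rpow_sub_one (by linarith : p ≠ 0) hf, mul_assoc]
      _ ≤ (u x - k)⁺ * ((u x - k)⁺ ^ p + ‖∇ u x‖ ^ p) := by
          gcongr
          exact rpow_sub_one_mul_le_rpow_add_rpow hp.le (norm_nonneg _) hf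
      _ = _ := by
          rw [indicator_of_mem hxZ, Real.rpow_add_one' hf (by linarith)]
          ring
  · rw [indicator_of_notMem hxZ]
    rcases posPart_eq_zero_or_gradient_eq_zero hx hxZ with h₀ | h₀
    · rw [h₀, Real.zero_rpow (by linarith), zero_mul, zero_mul, zero_add]
    · rw [h₀, norm_zero, mul_zero, Real.zero_rpow (by linarith), mul_zero, zero_add]

variable [MeasurableSpace E] [BorelSpace E]

/-- Superlevel sets close to the maximum have few noncritical points, because every point at which
an interior maximum is attained is critical. -/
lemma exists_measureReal_noncriticalSuperlevel_lt (hΩ : IsOpen Ω) (hb : Bornology.IsBounded Ω)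
    (hu : ContDiff ℝ 1 u) {S : ℝ} (hS : ∀ x ∈ Ω, u x ≤ S) (hm : m < S) {ε : ℝ} (hε : 0 < ε) :
    ∃ k ∈ Ioo m S, volume.real (noncriticalSuperlevel Ω u k) < ε := by
  obtain ⟨l, hl, hlmem, hltend⟩ := exists_seq_strictMono_tendsto' hm
  have hinter : ⋂ j, noncriticalSuperlevel Ω u (l j) = ∅ := by
    refine eq_empty_iff_forall_notMem.2 fun x hx => ?_
    rw [mem_iInter] at hx
    have hxΩ := (hx 0).1.1
    have hSx : S ≤ u x := le_of_tendsto' hltend fun j => (hx j).1.2.le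
    have hmax : IsLocalMax u x := by
      filter_upwards [hΩ.mem_nhds hxΩ] with y hy using (hS y hy).trans hSx
    exact (hx 0).2 (by rw [gradient, hmax.fderiv_eq_zero, map_zero])
  have htend := tendsto_measure_iInter_atTop (μ := volume)
    (s := fun j => noncriticalSuperlevel Ω u (l j))
    (fun j => (isOpen_noncriticalSuperlevel hΩ hu).measurableSet.nullMeasurableSet)
    (fun i j hij => inter_subset_inter_left _ (superlevel_anti Ω u (hl.monotone hij)))
    ⟨0, (hb.subset noncriticalSuperlevel_subset).measure_lt_top.ne⟩
  rw [hinter, measure_empty] at htend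
  obtain ⟨j, hj⟩ := (((ENNReal.tendsto_toReal ENNReal.zero_ne_top).comp htend).eventually
    (gt_mem_nhds hε)).exists
  exact ⟨l j, hlmem j, hj⟩

namespace DivAddNonneg

variable {V : E → E} {c : E → ℝ} {p C₁ B : ℝ}

lemma setIntegral_indicator_noncriticalSuperlevel (hΩ : IsOpen Ω) (hu : ContDiff ℝ 1 u)
    (F : E → ℝ) :
    ∫ x in Ω, (noncriticalSuperlevel Ω u k).indicator F x =
      ∫ x in noncriticalSuperlevel Ω u k, F x := by
  rw [setIntegral_indicator (isOpen_noncriticalSuperlevel hΩ hu).measurableSet,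
    inter_eq_self_of_subset_right noncriticalSuperlevel_subset]

lemma setIntegral_posPart_mul_norm_gradient_rpow_le (h : DivAddNonneg V c) (hp : 1 < p)
    (hC₁ : 0 < C₁) (hB : 0 ≤ B) (hΩ : IsOpen Ω) (hb : Bornology.IsBounded Ω) (hu : ContDiff ℝ 1 u)
    (hV : ∀ x ∈ Ω, C₁ * ‖∇ u x‖ ^ p ≤ ⟪V x, ∇ u x⟫)
    (hc : ∀ x ∈ Ω, c x ≤ B * ‖∇ u x‖ ^ (p - 1)) (hk : ∀ x ∈ frontier Ω, u x < k) :
    C₁ * ∫ x in Ω, (u x - k)⁺ * ‖∇ u x‖ ^ p ≤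
      B * (B / C₁) ^ (p - 1) * ∫ x in noncriticalSuperlevel Ω u k, (u x - k)⁺ ^ (p + 1) := by
  obtain ⟨hint, hnonneg⟩ := h.setIntegral_truncation hΩ hb hu hk
  have hfa := integrableOn_posPart_mul_norm_gradient_rpow (k := k) hu.continuous hu hb
    (by linarith : 0 ≤ p)
  have hfp := (integrableOn_posPart_rpow (k := k) hu.continuous hb
    (by linarith : 0 ≤ p + 1)).indicator (isOpen_noncriticalSuperlevel (k := k) hΩ hu).measurableSet
  have hle := hnonneg.trans (setIntegral_mono_on hint ((hfp.const_mul _).sub (hfa.const_mul _))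
    hΩ.measurableSet fun x hx => truncation_integrand_le hp hC₁ hB hx (hV x hx) (hc x hx))
  rw [integral_sub' (hfp.const_mul _) (hfa.const_mul _), integral_const_mul, integral_const_mul,
    setIntegral_indicator_noncriticalSuperlevel hΩ hu] at hle
  linarith

lemma integral_norm_gradient_truncPow_le (h : DivAddNonneg V c) (hp : 1 < p)
    (hC₁ : 0 < C₁) (hB : 0 ≤ B) (hΩ : IsOpen Ω) (hb : Bornology.IsBounded Ω) (hu : ContDiff ℝ 1 u)
    (hV : ∀ x ∈ Ω, C₁ * ‖∇ u x‖ ^ p ≤ ⟪V x, ∇ u x⟫)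
    (hc : ∀ x ∈ Ω, c x ≤ B * ‖∇ u x‖ ^ (p - 1)) (hk : ∀ x ∈ frontier Ω, u x < k) :
    ∫ x, ‖∇ (truncPow Ω u k (p + 1)) x‖ ≤
      (p + 1) * (1 + B * (B / C₁) ^ (p - 1) / C₁) *
        ∫ x in noncriticalSuperlevel Ω u k, ‖truncPow Ω u k (p + 1) x‖ := by
  set Z := noncriticalSuperlevel Ω u k
  have hZ : MeasurableSet Z := (isOpen_noncriticalSuperlevel hΩ hu).measurableSet
  have hfa := integrableOn_posPart_mul_norm_gradient_rpow (k := k) hu.continuous hu hb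
    (by linarith : 0 ≤ p)
  have hfp := (integrableOn_posPart_rpow (k := k) hu.continuous hb
    (by linarith : 0 ≤ p + 1)).indicator hZ
  have hW : ∫ x in Z, ‖truncPow Ω u k (p + 1) x‖ = ∫ x in Z, (u x - k)⁺ ^ (p + 1) :=
    setIntegral_congr_fun hZ fun x hx => by
      rw [Real.norm_of_nonneg (truncPow_nonneg x),
        truncPow_of_mem (noncriticalSuperlevel_subset hx)]
  calc ∫ x, ‖∇ (truncPow Ω u k (p + 1)) x‖
      = (p + 1) * ∫ x in Ω, (u x - k)⁺ ^ p * ‖∇ u x‖ := by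
        rw [integral_norm_gradient_truncPow hΩ hu (by linarith) hk, add_sub_cancel_right,
          ← integral_const_mul]
        simp only [mul_assoc]
    _ ≤ (p + 1) * ∫ x in Ω, (Z.indicator (fun x => (u x - k)⁺ ^ (p + 1)) x +
          (u x - k)⁺ * ‖∇ u x‖ ^ p) := by
        gcongr ?_ * ?_
        exact setIntegral_mono_on (integrableOn_posPart_rpow_mul_norm_gradient hu.continuous hu hb
          (by linarith)) (hfp.add hfa) hΩ.measurableSet
          fun x hx => posPart_rpow_mul_norm_gradient_le hp hx
    _ = (p + 1) * ((∫ x in Z, (u x - k)⁺ ^ (p + 1)) + ∫ x in Ω, (u x - k)⁺ * ‖∇ u x‖ ^ p) := by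
        rw [integral_add hfp hfa, setIntegral_indicator_noncriticalSuperlevel hΩ hu]
    _ ≤ (p + 1) * ((∫ x in Z, (u x - k)⁺ ^ (p + 1)) +
          B * (B / C₁) ^ (p - 1) / C₁ * ∫ x in Z, (u x - k)⁺ ^ (p + 1)) := by
        gcongr
        rw [div_mul_eq_mul_div, le_div_iff₀' hC₁]
        exact h.setIntegral_posPart_mul_norm_gradient_rpow_le hp hC₁ hB hΩ hb hu hV hc hk
    _ = _ := by rw [hW]; ring

lemma integral_norm_gradient_truncPow_eq_zero (h : DivAddNonneg V c)
    (hn : 1 < Module.finrank ℝ E) (hp : 1 < p) (hC₁ : 0 < C₁) (hB : 0 ≤ B) (hΩ : IsOpen Ω)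
    (hb : Bornology.IsBounded Ω) (hu : ContDiff ℝ 1 u)
    (hV : ∀ x ∈ Ω, C₁ * ‖∇ u x‖ ^ p ≤ ⟪V x, ∇ u x⟫)
    (hc : ∀ x ∈ Ω, c x ≤ B * ‖∇ u x‖ ^ (p - 1)) (hk : ∀ x ∈ frontier Ω, u x < k)
    (hsmall : (p + 1) * (1 + B * (B / C₁) ^ (p - 1) / C₁) * sobolevConst E *
      volume.real (noncriticalSuperlevel Ω u k) ^ (Module.finrank ℝ E : ℝ)⁻¹ < 1) :
    ∫ x, ‖∇ (truncPow Ω u k (p + 1)) x‖ = 0 := by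
  set I := ∫ x, ‖∇ (truncPow Ω u k (p + 1)) x‖
  have hI : 0 ≤ I := by positivity
  have hsob := setIntegral_norm_le_sobolevConst_mul (Z := noncriticalSuperlevel Ω u k) hn
    (contDiff_truncPow hΩ hu (by linarith : 1 < p + 1) hk) (hasCompactSupport_truncPow hb)
    (hb.subset noncriticalSuperlevel_subset).measure_lt_top.ne
  have hle : I ≤ _ := (h.integral_norm_gradient_truncPow_le hp hC₁ hB hΩ hb hu hV hc hk).trans
    (mul_le_mul_of_nonneg_left hsob (by positivity))
  nlinarith

/-- The maximum principle for lower order terms controlled by `‖∇u‖ ^ (p - 1)`. At levels close to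
an interior maximum the noncritical superlevel set is so small that the Sobolev inequality absorbs
the gradient term. -/
theorem le_of_forall_frontier_le (h : DivAddNonneg V c) (hn : 1 < Module.finrank ℝ E) (hp : 1 < p)
    (hC₁ : 0 < C₁) (hB : 0 ≤ B) (hΩ : IsOpen Ω) (hb : Bornology.IsBounded Ω) (hu : ContDiff ℝ 1 u)
    (hV : ∀ x ∈ Ω, C₁ * ‖∇ u x‖ ^ p ≤ ⟪V x, ∇ u x⟫)
    (hc : ∀ x ∈ Ω, c x ≤ B * ‖∇ u x‖ ^ (p - 1)) (hm : ∀ x ∈ frontier Ω, u x ≤ m) :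
    ∀ x ∈ Ω, u x ≤ m := by
  by_contra! ⟨y, hyΩ, hy⟩
  obtain ⟨z, hz, hzmax⟩ := hb.isCompact_closure.exists_isMaxOn ⟨y, subset_closure hyΩ⟩
    hu.continuous.continuousOn
  have hmz : m < u z := hy.trans_le (hzmax (subset_closure hyΩ))
  have hzΩ : z ∈ Ω := by
    by_contra hzΩ
    exact hmz.not_ge (hm z ⟨hz, fun hz' => hzΩ (interior_subset hz')⟩)
  set P := (p + 1) * (1 + B * (B / C₁) ^ (p - 1) / C₁) * sobolevConst E
  have hP : 0 ≤ P := mul_nonneg (by positivity) (sobolevConst_nonneg E)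
  obtain ⟨k, ⟨hmk, hkz⟩, hsmall⟩ := exists_measureReal_noncriticalSuperlevel_lt hΩ hb hu
    (fun x hx => hzmax (subset_closure hx)) hmz
    (show 0 < (P + 1)⁻¹ ^ Module.finrank ℝ E by positivity)
  have hk : ∀ x ∈ frontier Ω, u x < k := fun x hx => (hm x hx).trans_lt hmk
  have hgrad := h.integral_norm_gradient_truncPow_eq_zero hn hp hC₁ hB hΩ hb hu hV hc hk <| by
    calc _ ≤ P * (P + 1)⁻¹ := by
          gcongr
          exact (Real.rpow_le_rpow measureReal_nonneg hsmall.le (by positivity)).trans_eq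
            (Real.pow_rpow_inv_natCast (by positivity) (by omega))
      _ < 1 := by rw [← div_eq_mul_inv, div_lt_one (by positivity)]; linarith
  obtain ⟨d, hd, hdz⟩ : ∃ d, 0 < d ∧ k + d < u z := ⟨(u z - k) / 2, by linarith, by linarith⟩
  have hnull := rpow_mul_measureReal_superlevel_le hn hΩ hb hu (by linarith : 1 < p + 1) hk hd.le
  rw [hgrad, mul_zero] at hnull
  have hpos : 0 < volume.real (superlevel Ω u (k + d)) :=
    ENNReal.toReal_pos ((isOpen_superlevel hΩ hu.continuous _).measure_pos _ ⟨z, hzΩ, hdz⟩).ne'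
      (measure_superlevel_ne_top hb)
  exact hnull.not_gt (by positivity)

end DivAddNonneg

end MaximumPrinciple

section LevelIteration

variable {v : ℝ → ℝ} {m η P g : ℝ}

lemma apply_level_le_geometric (hv₀ : ∀ k, 0 ≤ v k) (hη : 0 < η) (hP : 0 ≤ P) (hg : 0 < g)
    (hdecay : ∀ k, m ≤ k → ∀ d > 0, d ^ 2 * v (k + d) ≤ P * v k ^ (1 + g))
    (hsmall : P * v m ^ g ≤ 4 ^ (-g⁻¹) / 4 * η ^ 2) (j : ℕ) :
    v (m + η * (1 - 2⁻¹ ^ j)) ≤ v m * (4 ^ (-g⁻¹)) ^ j := by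
  set θ : ℝ := 4 ^ (-g⁻¹)
  have hθ : 0 < θ := by positivity
  have hθg : θ ^ g = 4⁻¹ := by
    rw [← Real.rpow_mul (by norm_num), neg_mul, inv_mul_cancel₀ hg.ne', Real.rpow_neg_one]
  induction j with
  | zero => simp
  | succ j ih =>
    have hd : 0 < η * 2⁻¹ ^ j / 2 := by positivity
    have hk : m ≤ m + η * (1 - 2⁻¹ ^ j) :=
      le_add_of_nonneg_right (mul_nonneg hη.le (sub_nonneg.2 (pow_le_one₀ (by norm_num)
        (by norm_num))))
    have hpow : (θ ^ j) ^ g = (2⁻¹ ^ j) ^ 2 := by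
      rw [← Real.rpow_pow_comm hθ.le, hθg, pow_right_comm]
      norm_num
    refine le_of_mul_le_mul_left ?_ (sq_pos_of_pos hd)
    calc (η * 2⁻¹ ^ j / 2) ^ 2 * v (m + η * (1 - 2⁻¹ ^ (j + 1)))
        = (η * 2⁻¹ ^ j / 2) ^ 2 * v (m + η * (1 - 2⁻¹ ^ j) + η * 2⁻¹ ^ j / 2) := by
          congr 2
          ring
      _ ≤ P * v (m + η * (1 - 2⁻¹ ^ j)) ^ (1 + g) := hdecay _ hk _ hd
      _ ≤ P * (v m * θ ^ j) ^ (1 + g) := by gcongr; exact hv₀ _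
      _ = P * v m ^ g * (2⁻¹ ^ j) ^ 2 * (v m * θ ^ j) := by
          rw [Real.rpow_one_add' (mul_nonneg (hv₀ m) (by positivity)) (by positivity),
            Real.mul_rpow (hv₀ m) (by positivity), hpow]
          ring
      _ ≤ θ / 4 * η ^ 2 * (2⁻¹ ^ j) ^ 2 * (v m * θ ^ j) := by
          gcongr
          exact mul_nonneg (hv₀ m) (by positivity)
      _ = _ := by ring

/-- Stampacchia's iteration lemma. -/
theorem apply_add_eq_zero_of_superlinear_decay (hv : Antitone v) (hv₀ : ∀ k, 0 ≤ v k)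
    (hη : 0 < η) (hP : 0 ≤ P) (hg : 0 < g)
    (hdecay : ∀ k, m ≤ k → ∀ d > 0, d ^ 2 * v (k + d) ≤ P * v k ^ (1 + g))
    (hsmall : P * v m ^ g ≤ 4 ^ (-g⁻¹) / 4 * η ^ 2) : v (m + η) = 0 := by
  have hgeom : Tendsto (fun j : ℕ => v m * ((4 : ℝ) ^ (-g⁻¹)) ^ j) atTop (𝓝 (v m * 0)) :=
    (tendsto_pow_atTop_nhds_zero_of_lt_one (by positivity)
      (Real.rpow_lt_one_of_one_lt_of_neg (by norm_num) (by simpa))).const_mul _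
  rw [mul_zero] at hgeom
  refine le_antisymm (ge_of_tendsto' hgeom fun j => ?_) (hv₀ _)
  have hlevel : m + η * (1 - 2⁻¹ ^ j) ≤ m + η := by
    gcongr
    exact mul_le_of_le_one_right hη.le (sub_le_self _ (by positivity))
  exact (hv hlevel).trans (apply_level_le_geometric hv₀ hη hP hg hdecay hsmall j)

end LevelIteration

section Perturbation

variable {E : Type*} [NormedAddCommGroup E] [InnerProductSpace ℝ E] [FiniteDimensional ℝ E]
  [MeasurableSpace E] [BorelSpace E]

/-- A subsolution `u` together with a function `U` that is to be truncated in place of `u`: the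
gradients of `U` and `u` differ by at most `Λ`, and the part of `U` above the level `m` lies in the
interior of `Ω`, has height at most `D`, and sees a term `c` that is negative up to a small
multiple of the leading part. -/
structure PerturbedSubsolution (V : E → E) (c u U : E → ℝ) (Ω : Set E)
    (p C₁ C₂ Λ S K m D : ℝ) : Prop where
  divAddNonneg : DivAddNonneg V c
  isOpen : IsOpen Ω
  isBounded : Bornology.IsBounded Ω
  contDiff : ContDiff ℝ 1 u
  contDiff_perturbed : ContDiff ℝ 1 U
  one_lt_exponent : 1 < p
  coercivity_pos : 0 < C₁
  growth_nonneg : 0 ≤ C₂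
  gradient_bound_pos : 0 < Λ
  potential_nonneg : 0 ≤ K
  slope_nonneg : 0 ≤ S
  slope_mul_le : S * D ≤ C₁ / 2
  coercive : ∀ x ∈ Ω, C₁ * ‖∇ u x‖ ^ p ≤ ⟪V x, ∇ u x⟫
  growth : ∀ x ∈ Ω, ‖V x‖ ≤ C₂ * ‖∇ u x‖ ^ (p - 1)
  norm_gradient_sub_le : ∀ x ∈ Ω, ‖∇ U x - ∇ u x‖ ≤ Λ
  lt_of_mem_frontier : ∀ x ∈ frontier Ω, U x < m
  le_add : ∀ x ∈ Ω, U x ≤ m + D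
  term_le : ∀ᵐ x ∂volume.restrict Ω, m < U x → c x ≤ S * ‖∇ u x‖ ^ p - K

/-- The constant in front of the perturbation in the energy inequality. -/
def energyConst (p C₁ C₂ : ℝ) : ℝ := 2 * C₂ * (2 * C₂ / C₁) ^ (p - 1)

/-- The gradient factor in the decay of the measure of superlevel sets. -/
def decayConst (p C₁ C₂ : ℝ) : ℝ := 4 + 4 * energyConst p C₁ C₂ / C₁

namespace PerturbedSubsolution

variable {V : E → E} {c u U : E → ℝ} {Ω : Set E} {p C₁ C₂ Λ S K m D k : ℝ}

lemma energyConst_nonneg (h : PerturbedSubsolution V c u U Ω p C₁ C₂ Λ S K m D) :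
    0 ≤ energyConst p C₁ C₂ := by
  have := h.growth_nonneg
  have := h.coercivity_pos
  unfold energyConst
  positivity

lemma lt_of_mem_frontier_of_le (h : PerturbedSubsolution V c u U Ω p C₁ C₂ Λ S K m D)
    (hk : m ≤ k) : ∀ x ∈ frontier Ω, U x < k :=
  fun x hx => (h.lt_of_mem_frontier x hx).trans_le hk

lemma posPart_le (h : PerturbedSubsolution V c u U Ω p C₁ C₂ Λ S K m D) (hk : m ≤ k) {x : E}
    (hx : x ∈ superlevel Ω U k) : (U x - k)⁺ ≤ D := by
  rw [posPart_eq_self.2 (sub_nonneg.2 hx.2.le)]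
  linarith [h.le_add x hx.1]

lemma le_inner_gradient (h : PerturbedSubsolution V c u U Ω p C₁ C₂ Λ S K m D) {x : E}
    (hx : x ∈ Ω) :
    C₁ * ‖∇ u x‖ ^ p - C₂ * ‖∇ u x‖ ^ (p - 1) * Λ ≤ ⟪V x, ∇ U x⟫ := by
  have hpert : -(C₂ * ‖∇ u x‖ ^ (p - 1) * Λ) ≤ ⟪V x, ∇ U x - ∇ u x⟫ := by
    refine neg_le_of_neg_le ((neg_le_abs _).trans ((abs_real_inner_le_norm _ _).trans ?_))
    exact mul_le_mul (h.growth x hx) (h.norm_gradient_sub_le x hx) (norm_nonneg _)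
      ((norm_nonneg _).trans (h.growth x hx))
  rw [inner_sub_right] at hpert
  linarith [h.coercive x hx]

lemma truncation_integrand_le (h : PerturbedSubsolution V c u U Ω p C₁ C₂ Λ S K m D)
    (hk : m ≤ k) {x : E} (hx : x ∈ Ω) (hc : m < U x → c x ≤ S * ‖∇ u x‖ ^ p - K) :
    c x * (U x - k)⁺ ^ 2 - 2 * (U x - k)⁺ * ⟪V x, ∇ U x⟫ ≤
      energyConst p C₁ C₂ * Λ ^ p * (U x - k)⁺ -
        (C₁ / 2 * ((U x - k)⁺ * ‖∇ u x‖ ^ p) + K * (U x - k)⁺ ^ 2) := by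
  by_cases hkx : k < U x
  · set f := (U x - k)⁺
    have hf : 0 ≤ f := posPart_nonneg _
    have hterm : c x * f ^ 2 ≤ C₁ / 2 * (f * ‖∇ u x‖ ^ p) - K * f ^ 2 := by
      have hslope : S * f ≤ C₁ / 2 :=
        (mul_le_mul_of_nonneg_left (h.posPart_le hk ⟨hx, hkx⟩) h.slope_nonneg).trans h.slope_mul_le
      calc c x * f ^ 2 ≤ (S * ‖∇ u x‖ ^ p - K) * f ^ 2 := by
            gcongr
            exact hc (hk.trans_lt hkx)
        _ = S * f * (f * ‖∇ u x‖ ^ p) - K * f ^ 2 := by ring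
        _ ≤ _ := by gcongr
    have hyoung := mul_rpow_sub_one_le_mul_rpow_add h.coercivity_pos
      (mul_nonneg zero_le_two h.growth_nonneg) h.one_lt_exponent.le (norm_nonneg (∇ u x))
      h.gradient_bound_pos.le
    rw [← energyConst] at hyoung
    nlinarith [mul_le_mul_of_nonneg_left hyoung hf,
      mul_le_mul_of_nonneg_left (h.le_inner_gradient hx) hf]
  · simp [posPart_eq_zero.2 (sub_nonpos.2 (not_lt.1 hkx))]

lemma integrableOn_posPart (h : PerturbedSubsolution V c u U Ω p C₁ C₂ Λ S K m D) :
    IntegrableOn (fun x => (U x - k)⁺) Ω := by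
  simpa only [Real.rpow_one] using
    integrableOn_posPart_rpow h.contDiff_perturbed.continuous h.isBounded zero_le_one

lemma integrableOn_posPart_sq (h : PerturbedSubsolution V c u U Ω p C₁ C₂ Λ S K m D) :
    IntegrableOn (fun x => (U x - k)⁺ ^ 2) Ω := by
  simpa only [Real.rpow_two] using
    integrableOn_posPart_rpow h.contDiff_perturbed.continuous h.isBounded zero_le_two

lemma integrableOn_posPart_mul (h : PerturbedSubsolution V c u U Ω p C₁ C₂ Λ S K m D) :
    IntegrableOn (fun x => (U x - k)⁺ * ‖∇ u x‖ ^ p) Ω :=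
  integrableOn_posPart_mul_norm_gradient_rpow h.contDiff_perturbed.continuous h.contDiff
    h.isBounded (zero_le_one.trans h.one_lt_exponent.le)

theorem energy_le (h : PerturbedSubsolution V c u U Ω p C₁ C₂ Λ S K m D) (hk : m ≤ k) :
    C₁ / 2 * (∫ x in Ω, (U x - k)⁺ * ‖∇ u x‖ ^ p) + K * (∫ x in Ω, (U x - k)⁺ ^ 2) ≤
      energyConst p C₁ C₂ * Λ ^ p * ∫ x in Ω, (U x - k)⁺ := by
  obtain ⟨hint, hnonneg⟩ := h.divAddNonneg.setIntegral_truncation h.isOpen h.isBounded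
    h.contDiff_perturbed (h.lt_of_mem_frontier_of_le hk)
  have hlin := h.integrableOn_posPart (k := k).const_mul (energyConst p C₁ C₂ * Λ ^ p)
  have hgrad := h.integrableOn_posPart_mul (k := k).const_mul (C₁ / 2)
  have hsq := h.integrableOn_posPart_sq (k := k).const_mul K
  have hle := hnonneg.trans (integral_mono_ae hint (hlin.sub (hgrad.add hsq)) (by
    filter_upwards [h.term_le, ae_restrict_mem h.isOpen.measurableSet] with x hc hx
      using h.truncation_integrand_le hk hx hc))
  rw [integral_sub' hlin (hgrad.add hsq), integral_add' hgrad hsq, integral_const_mul,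
    integral_const_mul, integral_const_mul] at hle
  linarith

lemma setIntegral_posPart_le (h : PerturbedSubsolution V c u U Ω p C₁ C₂ Λ S K m D)
    (hk : m ≤ k) : ∫ x in Ω, (U x - k)⁺ ≤ D * volume.real (superlevel Ω U k) := by
  have hmeas := (isOpen_superlevel h.isOpen h.contDiff_perturbed.continuous k).measurableSet
  calc ∫ x in Ω, (U x - k)⁺
      = ∫ x in superlevel Ω U k, (U x - k)⁺ :=
        setIntegral_eq_of_subset_of_forall_sdiff_eq_zero h.isOpen.measurableSet
          (superlevel_subset Ω U k) fun x hx => posPart_eq_zero.2 <| sub_nonpos.2 <|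
            not_lt.1 fun hkx => hx.2 ⟨hx.1, hkx⟩
    _ ≤ ∫ _ in superlevel Ω U k, D :=
        setIntegral_mono_on (h.integrableOn_posPart.mono_set (superlevel_subset Ω U k))
          (integrableOn_const (measure_superlevel_ne_top h.isBounded)) hmeas
          fun x hx => h.posPart_le hk hx
    _ = _ := by rw [setIntegral_const, smul_eq_mul, mul_comm]

lemma setIntegral_posPart_mul_le (h : PerturbedSubsolution V c u U Ω p C₁ C₂ Λ S K m D)
    (hk : m ≤ k) :
    ∫ x in Ω, (U x - k)⁺ * ‖∇ u x‖ ^ p ≤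
      2 * energyConst p C₁ C₂ / C₁ * Λ ^ p * ∫ x in Ω, (U x - k)⁺ := by
  have hC₁ := h.coercivity_pos
  have hsq : 0 ≤ K * ∫ x in Ω, (U x - k)⁺ ^ 2 :=
    mul_nonneg h.potential_nonneg (integral_nonneg fun x => sq_nonneg _)
  rw [div_mul_eq_mul_div, div_mul_eq_mul_div, le_div_iff₀' hC₁]
  linarith [h.energy_le hk]

lemma norm_gradient_perturbed_le (h : PerturbedSubsolution V c u U Ω p C₁ C₂ Λ S K m D) {x : E}
    (hx : x ∈ Ω) : Λ ^ (p - 1) * ‖∇ U x‖ ≤ 2 * Λ ^ p + ‖∇ u x‖ ^ p := by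
  have hΛ := h.gradient_bound_pos
  have hnorm : ‖∇ U x‖ ≤ ‖∇ u x‖ + Λ := by
    linarith [norm_le_norm_add_norm_sub (∇ u x) (∇ U x), norm_sub_rev (∇ u x) (∇ U x),
      h.norm_gradient_sub_le x hx]
  calc Λ ^ (p - 1) * ‖∇ U x‖ ≤ Λ ^ (p - 1) * ‖∇ u x‖ + Λ * Λ ^ (p - 1) := by
        rw [mul_comm Λ, ← mul_add]
        gcongr
    _ ≤ Λ ^ p + ‖∇ u x‖ ^ p + Λ ^ p :=
        add_le_add (rpow_sub_one_mul_le_rpow_add_rpow h.one_lt_exponent.le (norm_nonneg _) hΛ.le)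
          (rpow_eq_mul_rpow_sub_one (by linarith [h.one_lt_exponent]) hΛ.le).ge
    _ = _ := by ring

lemma integral_norm_gradient_truncPow_le
    (h : PerturbedSubsolution V c u U Ω p C₁ C₂ Λ S K m D) (hk : m ≤ k) :
    ∫ x, ‖∇ (truncPow Ω U k 2) x‖ ≤
      decayConst p C₁ C₂ * (Λ * D) * volume.real (superlevel Ω U k) := by
  have hΛ := h.gradient_bound_pos
  have hC₁ := h.coercivity_pos
  have hconst := h.energyConst_nonneg
  set J := ∫ x in Ω, (U x - k)⁺
  have hlin := (h.integrableOn_posPart (k := k)).const_mul (4 * Λ ^ p)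
  have hgrad := (h.integrableOn_posPart_mul (k := k)).const_mul 2
  have hU := integrableOn_posPart_mul_norm_gradient_rpow (k := k) h.contDiff_perturbed.continuous
    h.contDiff_perturbed h.isBounded zero_le_one
  refine le_of_mul_le_mul_left ?_ (Real.rpow_pos_of_pos hΛ (p - 1))
  calc Λ ^ (p - 1) * ∫ x, ‖∇ (truncPow Ω U k 2) x‖
      = ∫ x in Ω, 2 * Λ ^ (p - 1) * ((U x - k)⁺ * ‖∇ U x‖ ^ (1 : ℝ)) := by
        rw [integral_norm_gradient_truncPow h.isOpen h.contDiff_perturbed one_lt_two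
          (h.lt_of_mem_frontier_of_le hk), ← integral_const_mul]
        congr 1 with x
        rw [show (2 : ℝ) - 1 = 1 by norm_num, Real.rpow_one, Real.rpow_one]
        ring
    _ ≤ ∫ x in Ω, (4 * Λ ^ p * (U x - k)⁺ + 2 * ((U x - k)⁺ * ‖∇ u x‖ ^ p)) :=
        setIntegral_mono_on (hU.const_mul _) (hlin.add hgrad) h.isOpen.measurableSet fun x hx => by
          rw [Real.rpow_one]
          nlinarith [mul_le_mul_of_nonneg_left (h.norm_gradient_perturbed_le hx)
            (posPart_nonneg (U x - k))]
    _ = 4 * Λ ^ p * J + 2 * ∫ x in Ω, (U x - k)⁺ * ‖∇ u x‖ ^ p := by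
        rw [integral_add hlin hgrad, integral_const_mul, integral_const_mul]
    _ ≤ 4 * Λ ^ p * J + 2 * (2 * energyConst p C₁ C₂ / C₁ * Λ ^ p * J) := by
        gcongr
        exact h.setIntegral_posPart_mul_le hk
    _ = decayConst p C₁ C₂ * Λ ^ p * J := by rw [decayConst]; ring
    _ ≤ decayConst p C₁ C₂ * Λ ^ p * (D * volume.real (superlevel Ω U k)) := by
        gcongr
        · unfold decayConst; positivity
        · exact h.setIntegral_posPart_le hk
    _ = _ := by rw [rpow_eq_mul_rpow_sub_one (by linarith [h.one_lt_exponent]) hΛ.le]; ring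

theorem measureReal_superlevel_decay (h : PerturbedSubsolution V c u U Ω p C₁ C₂ Λ S K m D)
    (hn : 1 < Module.finrank ℝ E) (hk : m ≤ k) {d : ℝ} (hd : 0 ≤ d) :
    d ^ 2 * volume.real (superlevel Ω U (k + d)) ≤
      sobolevConst E * (decayConst p C₁ C₂ * (Λ * D)) *
        volume.real (superlevel Ω U k) ^ (1 + (Module.finrank ℝ E : ℝ)⁻¹) := by
  have hsob := rpow_mul_measureReal_superlevel_le hn h.isOpen h.isBounded h.contDiff_perturbed
    one_lt_two (h.lt_of_mem_frontier_of_le hk) hd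
  rw [Real.rpow_two] at hsob
  calc d ^ 2 * volume.real (superlevel Ω U (k + d)) ≤ _ := hsob
    _ ≤ sobolevConst E * volume.real (superlevel Ω U k) ^ (Module.finrank ℝ E : ℝ)⁻¹ *
          (decayConst p C₁ C₂ * (Λ * D) * volume.real (superlevel Ω U k)) := by
        gcongr
        · exact mul_nonneg (sobolevConst_nonneg E) (by positivity)
        · exact h.integral_norm_gradient_truncPow_le hk
    _ = _ := by
        rw [Real.rpow_one_add' measureReal_nonneg (by positivity)]
        ring

theorem measureReal_superlevel_le (h : PerturbedSubsolution V c u U Ω p C₁ C₂ Λ S K m D)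
    (hk : m ≤ k) {d : ℝ} (hd : 0 ≤ d) :
    K * (d ^ 2 * volume.real (superlevel Ω U (k + d))) ≤
      energyConst p C₁ C₂ * Λ ^ p * (D * volume.real (superlevel Ω U k)) := by
  have hΛ := h.gradient_bound_pos
  have hconst := h.energyConst_nonneg
  have hcheb := rpow_mul_measureReal_superlevel_le_setIntegral (U := U) (k := k) (s := 2) h.isOpen
    h.isBounded h.contDiff_perturbed.continuous zero_le_two hd
  simp only [Real.rpow_two] at hcheb
  have hgrad : 0 ≤ C₁ / 2 * ∫ x in Ω, (U x - k)⁺ * ‖∇ u x‖ ^ p :=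
    mul_nonneg (half_pos h.coercivity_pos).le (integral_nonneg fun x => by positivity)
  calc K * (d ^ 2 * volume.real (superlevel Ω U (k + d)))
      ≤ K * ∫ x in Ω, (U x - k)⁺ ^ 2 :=
        mul_le_mul_of_nonneg_left (hcheb.trans (setIntegral_mono_set h.integrableOn_posPart_sq
          (.of_forall fun x => sq_nonneg _) (superlevel_subset Ω U k).eventuallyLE))
          h.potential_nonneg
    _ ≤ energyConst p C₁ C₂ * Λ ^ p * ∫ x in Ω, (U x - k)⁺ := by linarith [h.energy_le hk]
    _ ≤ _ := by
        gcongr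
        exact h.setIntegral_posPart_le hk

end PerturbedSubsolution

end Perturbation

section InteriorEstimate

variable {E : Type*} [NormedAddCommGroup E]

/-- The function `u` lowered by a paraboloid with vertex `x₀`; the gradient of the paraboloid is at
most `4 * τ` on the ball with centre `x₀` and radius `R`, and its height on the sphere is
`2 * (τ * R)`. -/
def subParaboloid (u : E → ℝ) (x₀ : E) (τ R : ℝ) : E → ℝ :=
  fun x => u x - 2 * (τ / R) * ‖x - x₀‖ ^ 2

variable {u : E → ℝ} {x₀ x : E} {τ R : ℝ}

lemma subParaboloid_self : subParaboloid u x₀ τ R x₀ = u x₀ := by simp [subParaboloid]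

lemma subParaboloid_le (hτ : 0 ≤ τ) (hR : 0 ≤ R) : subParaboloid u x₀ τ R x ≤ u x :=
  sub_le_self _ (by positivity)

lemma subParaboloid_of_mem_sphere (hx : x ∈ sphere x₀ R) :
    subParaboloid u x₀ τ R x = u x - 2 * (τ * R) := by
  rw [subParaboloid, mem_sphere_iff_norm.1 hx]
  field_simp

variable [InnerProductSpace ℝ E]

lemma contDiff_subParaboloid (hu : ContDiff ℝ 1 u) : ContDiff ℝ 1 (subParaboloid u x₀ τ R) :=
  hu.sub (contDiff_const.mul ((contDiff_id.sub contDiff_const).norm_sq ℝ))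

lemma gradient_subParaboloid [CompleteSpace E] (hu : ContDiff ℝ 1 u) :
    ∇ (subParaboloid u x₀ τ R) x = ∇ u x - (4 * (τ / R)) • (x - x₀) := by
  refine HasGradientAt.gradient (hasGradientAt_iff_hasFDerivAt.2 ?_)
  refine ((hu.differentiable one_ne_zero x).hasFDerivAt.sub
    ((((hasFDerivAt_id x).sub_const x₀).norm_sq).const_mul (2 * (τ / R)))).congr_fderiv ?_
  rw [map_sub (InnerProductSpace.toDual ℝ E), toDual_gradient]
  congr 1
  ext y
  simp
  ring

lemma norm_gradient_subParaboloid_sub_le [CompleteSpace E] (hu : ContDiff ℝ 1 u) (hτ : 0 ≤ τ)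
    (hR : 0 < R) (hx : x ∈ ball x₀ R) : ‖∇ (subParaboloid u x₀ τ R) x - ∇ u x‖ ≤ 4 * τ := by
  rw [gradient_subParaboloid hu, sub_sub_cancel_left, norm_neg, norm_smul,
    Real.norm_of_nonneg (by positivity)]
  calc 4 * (τ / R) * ‖x - x₀‖ ≤ 4 * (τ / R) * R := by
        gcongr
        exact (mem_ball_iff_norm.1 hx).le
    _ = 4 * τ := by field_simp

lemma exists_pos_mul_rpow_inv_le {n : ℕ} (hn : n ≠ 0) (A B : ℝ) {s : ℝ} (hs : 0 < s) :
    ∃ ε > 0, B * (A * ε) ^ (n : ℝ)⁻¹ ≤ s := by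
  have hcont : Continuous fun ε : ℝ => B * (A * ε) ^ (n : ℝ)⁻¹ :=
    continuous_const.mul ((continuous_const.mul continuous_id).rpow_const
      fun _ => Or.inr (by positivity))
  have hnear : ∀ᶠ ε in 𝓝[>] (0 : ℝ), B * (A * ε) ^ (n : ℝ)⁻¹ < s :=
    (hcont.tendsto 0).mono_left nhdsWithin_le_nhds |>.eventually_lt_const (by
      simpa [Real.zero_rpow (inv_ne_zero (Nat.cast_ne_zero.2 hn))])
  obtain ⟨ε, hε, hpos⟩ := (hnear.and self_mem_nhdsWithin).exists
  exact ⟨ε, hpos, hε.le⟩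

variable [FiniteDimensional ℝ E] [MeasurableSpace E] [BorelSpace E]

namespace PerturbedSubsolution

variable {V : E → E} {c U : E → ℝ} {Ω : Set E} {p C₁ C₂ Λ S K m D k : ℝ}

theorem apply_le_of_measureReal_superlevel_le
    (h : PerturbedSubsolution V c u U Ω p C₁ C₂ Λ S K m D) (hn : 1 < Module.finrank ℝ E)
    (hk : m ≤ k) (hD : 0 ≤ D) {η : ℝ} (hη : 0 < η)
    (hsmall : sobolevConst E * (decayConst p C₁ C₂ * (Λ * D)) *
      volume.real (superlevel Ω U k) ^ (Module.finrank ℝ E : ℝ)⁻¹ ≤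
        4 ^ (-(Module.finrank ℝ E : ℝ)) / 4 * η ^ 2) :
    ∀ x ∈ Ω, U x ≤ k + η := by
  intro x hx
  by_contra! hlt
  have hpos : 0 < volume.real (superlevel Ω U (k + η)) :=
    ENNReal.toReal_pos ((isOpen_superlevel h.isOpen h.contDiff_perturbed.continuous _).measure_pos _
      ⟨x, hx, hlt⟩).ne' (measure_superlevel_ne_top h.isBounded)
  have hΛ := h.gradient_bound_pos
  have hC₁ := h.coercivity_pos
  have hconst := h.energyConst_nonneg
  refine hpos.ne' (apply_add_eq_zero_of_superlinear_decay
    (v := fun k => volume.real (superlevel Ω U k)) (m := k)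
    (fun i j hij => measureReal_mono (superlevel_anti Ω U hij)
      (measure_superlevel_ne_top h.isBounded))
    (fun _ => measureReal_nonneg) hη ?_ (g := (Module.finrank ℝ E : ℝ)⁻¹) (by positivity)
    (fun l hl d hd => h.measureReal_superlevel_decay hn (hk.trans hl) hd.le) ?_)
  · exact mul_nonneg (sobolevConst_nonneg E) (by unfold decayConst; positivity)
  · rwa [inv_inv]

lemma measureReal_superlevel_ball_le {x₀ : E} {R τ γ : ℝ} (hR : 0 < R) (hτ : 0 < τ)
    (hγ : 0 < γ)
    (h : PerturbedSubsolution V c u U (ball x₀ R) p C₁ C₂ (4 * τ) S K m (2 * (τ * R))) :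
    K * R * volume.real (superlevel (ball x₀ R) U (m + γ * (τ * R) / 2)) ≤
      energyConst p C₁ C₂ * 4 ^ p * 8 * volume.real (ball (0 : E) 1) / γ ^ 2 * τ ^ (p - 1) *
        R ^ Module.finrank ℝ E := by
  have hconst := h.energyConst_nonneg
  have hp : p ≠ 0 := by linarith [h.one_lt_exponent]
  have hball : volume.real (superlevel (ball x₀ R) U m) ≤
      R ^ Module.finrank ℝ E * volume.real (ball (0 : E) 1) := by
    refine (measureReal_mono (superlevel_subset _ _ _) measure_ball_lt_top.ne).trans_eq ?_
    rw [measureReal_def, Measure.addHaar_ball_of_pos _ _ hR, ENNReal.toReal_mul,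
      ENNReal.toReal_ofReal (by positivity), measureReal_def]
  refine le_of_mul_le_mul_left ?_ (show 0 < γ ^ 2 * τ ^ 2 * R / 4 by positivity)
  calc γ ^ 2 * τ ^ 2 * R / 4 * (K * R * _)
      = K * ((γ * (τ * R) / 2) ^ 2 * volume.real
          (superlevel (ball x₀ R) U (m + γ * (τ * R) / 2))) := by ring
    _ ≤ energyConst p C₁ C₂ * (4 * τ) ^ p *
          (2 * (τ * R) * volume.real (superlevel (ball x₀ R) U m)) :=
        h.measureReal_superlevel_le le_rfl (by positivity)
    _ ≤ energyConst p C₁ C₂ * (4 * τ) ^ p *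
          (2 * (τ * R) * (R ^ Module.finrank ℝ E * volume.real (ball (0 : E) 1))) := by gcongr
    _ = _ := by
        rw [Real.mul_rpow zero_le_four hτ.le, rpow_eq_mul_rpow_sub_one hp hτ.le]
        field_simp
        ring

variable (E p C₁ C₂) in
/-- If `K` is too large, the energy inequality leaves so little measure to the superlevel set at
height `γ * (τ * R) / 2` above `m` that Stampacchia's iteration empties the one at twice that
height. -/
theorem exists_mul_le_rpow (hn : 1 < Module.finrank ℝ E) {γ : ℝ} (hγ : 0 < γ) :
    ∃ ε > 0, ∀ {V : E → E} {c u U : E → ℝ} {x₀ : E} {R τ S K m : ℝ}, 0 < R → 0 < τ →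
      PerturbedSubsolution V c u U (ball x₀ R) p C₁ C₂ (4 * τ) S K m (2 * (τ * R)) →
      m + γ * (τ * R) < U x₀ → ε * K * R ≤ τ ^ (p - 1) := by
  set n := Module.finrank ℝ E
  set ω := volume.real (ball (0 : E) 1)
  set A := energyConst p C₁ C₂ * 4 ^ p * 8 * ω / γ ^ 2
  set B := sobolevConst E * decayConst p C₁ C₂ * 8
  obtain ⟨ε, hε, hεs⟩ := exists_pos_mul_rpow_inv_le (by omega : n ≠ 0) A B
    (show 0 < 4 ^ (-(n : ℝ)) / 4 * (γ / 2) ^ 2 by positivity)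
  refine ⟨ε, hε, fun {V c u U x₀ R τ S K m} hR hτ h hcenter => ?_⟩
  by_contra! hlt
  have hK : 0 < K := (mul_pos_iff_of_pos_left hε).1
    ((mul_pos_iff_of_pos_right hR).1 ((Real.rpow_pos_of_pos hτ _).trans hlt))
  have hconst := h.energyConst_nonneg
  have hC₁ := h.coercivity_pos
  have : 0 ≤ A := by positivity
  set v := volume.real (superlevel (ball x₀ R) U (m + γ * (τ * R) / 2))
  have hv : v ≤ A * ε * R ^ n := by
    refine le_of_mul_le_mul_left ?_ (mul_pos hK hR)
    calc K * R * v ≤ A * τ ^ (p - 1) * R ^ n := h.measureReal_superlevel_ball_le hR hτ hγ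
      _ ≤ A * (ε * K * R) * R ^ n := by gcongr
      _ = _ := by ring
  have hroot : v ^ (n : ℝ)⁻¹ ≤ (A * ε) ^ (n : ℝ)⁻¹ * R := by
    calc v ^ (n : ℝ)⁻¹ ≤ (A * ε * R ^ n) ^ (n : ℝ)⁻¹ :=
          Real.rpow_le_rpow measureReal_nonneg hv (by positivity)
      _ = _ := by
          rw [Real.mul_rpow (by positivity) (by positivity),
            Real.pow_rpow_inv_natCast hR.le (by omega)]
  refine hcenter.not_ge ((h.apply_le_of_measureReal_superlevel_le hn (k := m + γ * (τ * R) / 2)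
    (η := γ * (τ * R) / 2) (le_add_of_nonneg_right (by positivity)) (by positivity) (by positivity)
    ?_ x₀ (mem_ball_self hR)).trans (by linarith))
  calc _ ≤ sobolevConst E * (decayConst p C₁ C₂ * (4 * τ * (2 * (τ * R)))) *
        ((A * ε) ^ (n : ℝ)⁻¹ * R) := by
        gcongr
        exact mul_nonneg (sobolevConst_nonneg E) (by unfold decayConst; positivity)
    _ = B * (A * ε) ^ (n : ℝ)⁻¹ * (τ * R) ^ 2 := by ring
    _ ≤ 4 ^ (-(n : ℝ)) / 4 * (γ / 2) ^ 2 * (τ * R) ^ 2 := by gcongr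
    _ = _ := by ring

end PerturbedSubsolution

lemma DivAddNonneg.perturbedSubsolution_subParaboloid {V : E → E} {c : E → ℝ}
    {p C₁ C₂ S K m : ℝ} (h : DivAddNonneg V c) (hu : ContDiff ℝ 1 u) (hp : 1 < p) (hC₁ : 0 < C₁)
    (hC₂ : 0 ≤ C₂) (hτ : 0 < τ) (hR : 0 < R) (hK : 0 ≤ K) (hS : 0 ≤ S)
    (hSD : S * (2 * (τ * R)) ≤ C₁ / 2)
    (hcoercive : ∀ x ∈ ball x₀ R, C₁ * ‖∇ u x‖ ^ p ≤ ⟪V x, ∇ u x⟫)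
    (hgrowth : ∀ x ∈ ball x₀ R, ‖V x‖ ≤ C₂ * ‖∇ u x‖ ^ (p - 1))
    (hlt : ∀ x ∈ closedBall x₀ R, u x < m + 2 * (τ * R))
    (hc : ∀ᵐ x ∂volume.restrict (ball x₀ R), m < u x → c x ≤ S * ‖∇ u x‖ ^ p - K) :
    PerturbedSubsolution V c u (subParaboloid u x₀ τ R) (ball x₀ R) p C₁ C₂ (4 * τ) S K m
      (2 * (τ * R)) where
  divAddNonneg := h
  isOpen := isOpen_ball
  isBounded := isBounded_ball
  contDiff := hu
  contDiff_perturbed := contDiff_subParaboloid hu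
  one_lt_exponent := hp
  coercivity_pos := hC₁
  growth_nonneg := hC₂
  gradient_bound_pos := by positivity
  potential_nonneg := hK
  slope_nonneg := hS
  slope_mul_le := hSD
  coercive := hcoercive
  growth := hgrowth
  norm_gradient_sub_le _ hx := norm_gradient_subParaboloid_sub_le hu hτ.le hR hx
  lt_of_mem_frontier x hx := by
    have hx' := frontier_ball_subset_sphere hx
    rw [subParaboloid_of_mem_sphere hx', sub_lt_iff_lt_add]
    exact hlt x (sphere_subset_closedBall hx')
  le_add x hx :=
    (subParaboloid_le hτ.le hR.le).trans (hlt x (ball_subset_closedBall hx)).le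
  term_le := by
    filter_upwards [hc] with x hx hlt
    exact hx (hlt.trans_le (subParaboloid_le hτ.le hR.le))

end InteriorEstimate

section EntireSubsolution

variable {n : ℕ} {p C₁ C₂ α : ℝ} {A : Euc n → Euc n → Euc n} {b q : Euc n → ℝ} {g : ℝ → ℝ}
  {u : Euc n → ℝ}

lemma LocBdd.locallyIntegrable_mul {f : Euc n → ℝ} (hb : LocBdd b) (hbm : Measurable b)
    (hb₀ : ∀ x, 0 ≤ b x) (hf : Continuous f) : LocallyIntegrable fun x => b x * f x := by
  refine locallyIntegrable_iff.2 fun K hK => ?_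
  obtain ⟨C, hC⟩ := hb K hK
  refine IntegrableOn.mul_continuousOn (Measure.integrableOn_of_bounded (M := C)
    hK.measure_lt_top.ne hbm.aestronglyMeasurable ?_) hf.continuousOn hK
  filter_upwards [ae_restrict_mem hK.measurableSet] with x hx
  rw [Real.norm_of_nonneg (hb₀ x)]
  exact hC x hx

lemma exists_mem_sphere_eq_sphMax (hn : n ≠ 0) (hu : Continuous u) {r : ℝ} (hr : 0 ≤ r) :
    ∃ x ∈ sphere (0 : Euc n) r, u x = sphMax u r := by
  have : NeZero n := ⟨hn⟩
  exact ((isCompact_sphere _ r).image hu).sSup_mem ((NormedSpace.sphere_nonempty.2 hr).image u)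

lemma le_sphMax (hu : Continuous u) {r : ℝ} {x : Euc n} (hx : x ∈ sphere (0 : Euc n) r) :
    u x ≤ sphMax u r :=
  le_csSup ((isCompact_sphere _ r).image hu).bddAbove (mem_image_of_mem u hx)

lemma sphMax_nonneg (hu : ∀ x, 0 ≤ u x) (r : ℝ) : 0 ≤ sphMax u r :=
  Real.sSup_nonneg (forall_mem_image.2 fun x _ => hu x)

variable (p C₁ C₂ α A b q g u) in
/-- A nonnegative `C¹` solution `u` of `div A(x,Du) + b(x)|Du|^α ≥ q(x)g(u)` in `ℝⁿ`, together with
the standing assumptions on the exponents and the coefficients. -/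
structure IsEntireSubsolution : Prop where
  one_lt_exponent : 1 < p
  coercivity_pos : 0 < C₁
  growth_nonneg : 0 ≤ C₂
  sub_one_le : p - 1 ≤ α
  le_exponent : α ≤ p
  structCond : StructCond A p C₁ C₂
  measurable_drift : Measurable b
  drift_nonneg : ∀ x, 0 ≤ b x
  locBdd_drift : LocBdd b
  measurable_weight : Measurable q
  weight_nonneg : ∀ x, 0 ≤ q x
  locBdd_weight : LocBdd q
  continuousOn_nonlinearity : ContinuousOn g (Ici 0)
  nonlinearity_nonneg : ∀ t ∈ Ici (0 : ℝ), 0 ≤ g t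
  contDiff : ContDiff ℝ 1 u
  nonneg : ∀ x, 0 ≤ u x
  isWeakSol : IsWeakSol A b α (fun x => q x * g (u x)) univ u

namespace IsEntireSubsolution

lemma exponent_nonneg (h : IsEntireSubsolution p C₁ C₂ α A b q g u) : 0 ≤ α := by
  linarith [h.one_lt_exponent, h.sub_one_le]

lemma coercive (h : IsEntireSubsolution p C₁ C₂ α A b q g u) (x : Euc n) :
    C₁ * ‖∇ u x‖ ^ p ≤ ⟪A x (∇ u x), ∇ u x⟫ :=
  (h.structCond.2 x (∇ u x)).1.trans_eq (real_inner_comm _ _)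

lemma growth (h : IsEntireSubsolution p C₁ C₂ α A b q g u) (x : Euc n) :
    ‖A x (∇ u x)‖ ≤ C₂ * ‖∇ u x‖ ^ (p - 1) :=
  (h.structCond.2 x (∇ u x)).2

lemma weight_mul_nonneg (h : IsEntireSubsolution p C₁ C₂ α A b q g u) (x : Euc n) :
    0 ≤ q x * g (u x) :=
  mul_nonneg (h.weight_nonneg x) (h.nonlinearity_nonneg _ (h.nonneg x))

lemma continuous_norm_gradient_rpow (h : IsEntireSubsolution p C₁ C₂ α A b q g u) {s : ℝ}
    (hs : 0 ≤ s) : Continuous fun x => ‖∇ u x‖ ^ s :=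
  (continuous_gradient h.contDiff).norm.rpow_const fun _ => Or.inr hs

theorem divAddNonneg (h : IsEntireSubsolution p C₁ C₂ α A b q g u) :
    DivAddNonneg (fun x => A x (∇ u x)) (fun x => b x * ‖∇ u x‖ ^ α - q x * g (u x)) := by
  have hp := h.one_lt_exponent
  have hgu : Continuous fun x => g (u x) :=
    h.continuousOn_nonlinearity.comp_continuous h.contDiff.continuous h.nonneg
  have hdrift := h.locBdd_drift.locallyIntegrable_mul h.measurable_drift h.drift_nonneg
    (h.continuous_norm_gradient_rpow h.exponent_nonneg)
  have hsource := h.locBdd_weight.locallyIntegrable_mul h.measurable_weight h.weight_nonneg hgu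
  refine ⟨?_, hdrift.sub hsource, fun ψ hψ hψc hψ₀ => ?_⟩
  · have hbound : Continuous fun x => C₂ * ‖∇ u x‖ ^ (p - 1) :=
      continuous_const.mul (h.continuous_norm_gradient_rpow (by linarith))
    exact hbound.locallyIntegrable.mono
      (h.structCond.1.comp (measurable_id.prodMk
        (continuous_gradient h.contDiff).measurable)).aestronglyMeasurable
      (.of_forall fun x => (h.growth x).trans (Real.le_norm_self _))
  · have hweak := h.isWeakSol ψ hψ hψc (subset_univ _) hψ₀
    have hint {f : Euc n → ℝ} (hf : LocallyIntegrable f) : Integrable fun x => f x * ψ x := by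
      simpa only [smul_eq_mul, mul_comm] using
        hf.integrable_smul_left_of_hasCompactSupport hψ.continuous hψc
    simp only [setIntegral_univ] at hweak
    simp only [sub_mul]
    rw [integral_sub (hint hdrift) (hint hsource)]
    linarith

theorem le_sphMax_of_mem_closedBall (h : IsEntireSubsolution p C₁ C₂ α A b q g u) (hn : 2 ≤ n)
    {R : ℝ} {x : Euc n} (hx : x ∈ closedBall (0 : Euc n) R) : u x ≤ sphMax u R := by
  have hsub := h.sub_one_le
  have hp := h.one_lt_exponent
  obtain ⟨D, hD⟩ := (isCompact_closedBall (0 : Euc n) R).exists_bound_of_continuousOn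
    (h.continuous_norm_gradient_rpow (s := α - p + 1) (by linarith)).continuousOn
  obtain ⟨B, hB⟩ := h.locBdd_drift _ (isCompact_closedBall (0 : Euc n) R)
  rcases (mem_closedBall.1 hx).lt_or_eq with hlt | heq
  · refine h.divAddNonneg.le_of_forall_frontier_le (by rw [finrank_euclideanSpace_fin]; omega) hp
      h.coercivity_pos (B := |B| * |D|) (by positivity) isOpen_ball isBounded_ball h.contDiff
      (fun x _ => h.coercive x) (fun y hy => ?_)
      (fun y hy => le_sphMax h.contDiff.continuous (frontier_ball_subset_sphere hy)) x hlt
    have hy' := ball_subset_closedBall hy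
    calc b y * ‖∇ u y‖ ^ α - q y * g (u y) ≤ b y * ‖∇ u y‖ ^ α :=
          sub_le_self _ (h.weight_mul_nonneg y)
      _ = b y * ‖∇ u y‖ ^ (α - p + 1) * ‖∇ u y‖ ^ (p - 1) := by
          rw [mul_assoc, ← Real.rpow_add_of_nonneg (norm_nonneg _) (by linarith) (by linarith)]
          ring_nf
      _ ≤ |B| * |D| * ‖∇ u y‖ ^ (p - 1) := by
          gcongr
          · exact (hB y hy').trans (le_abs_self B)
          · exact (Real.le_norm_self _).trans ((hD y hy').trans (le_abs_self D))
  · exact le_sphMax h.contDiff.continuous heq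

lemma monotoneOn_sphMax (h : IsEntireSubsolution p C₁ C₂ α A b q g u) (hn : 2 ≤ n) :
    MonotoneOn (sphMax u) (Ici 0) := by
  intro r hr s _ hrs
  obtain ⟨x, hx, hux⟩ := exists_mem_sphere_eq_sphMax (by omega : n ≠ 0) h.contDiff.continuous hr
  rw [← hux]
  exact h.le_sphMax_of_mem_closedBall hn
    (closedBall_subset_closedBall hrs (sphere_subset_closedBall hx))

lemma term_le (h : IsEntireSubsolution p C₁ C₂ α A b q g u) {T B κ : ℝ} (hT : 0 < T) {x : Euc n}
    (hb : b x ≤ B) (hκ : κ ≤ q x * g (u x)) :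
    b x * ‖∇ u x‖ ^ α - q x * g (u x) ≤
      B * T ^ (α - p) * ‖∇ u x‖ ^ p - (κ - B * T ^ α) := by
  have hyoung := rpow_le_rpow_add_mul_rpow hT h.exponent_nonneg h.le_exponent
    (norm_nonneg (∇ u x))
  have hdrift : b x * ‖∇ u x‖ ^ α ≤ B * (T ^ α + T ^ (α - p) * ‖∇ u x‖ ^ p) :=
    mul_le_mul hb hyoung (by positivity) ((h.drift_nonneg x).trans hb)
  linarith

end IsEntireSubsolution

lemma closedBall_subset_closedBall_zero {x₀ : Euc n} {r t : ℝ} (hx₀ : ‖x₀‖ = r + t / 2) :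
    closedBall x₀ (t / 2) ⊆ closedBall 0 (r + t) :=
  closedBall_subset_closedBall' (by rw [dist_zero_right, hx₀]; linarith)

lemma ball_subset_Ann {x₀ : Euc n} {r t : ℝ} (hx₀ : ‖x₀‖ = r + t / 2) :
    ball x₀ (t / 2) ⊆ Ann n r (r + t) := by
  intro x hx
  have hdist := abs_lt.1 ((abs_norm_sub_norm_le x x₀).trans_lt (mem_ball_iff_norm.1 hx))
  exact ⟨by linarith, by linarith⟩

/-- Slow growth of `M(·; u)` across a thin shell bounds the source term there: the estimate
`PerturbedSubsolution.exists_mul_le_rpow` is applied in a ball that is centred at a maximum point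
of `u` on the middle sphere of the shell and touches both of its boundary spheres. -/
theorem IsEntireSubsolution.exists_shell_bound (hn : 2 ≤ n) (p C₁ C₂ : ℝ) {β : ℝ} (hβ : 0 < β)
    (hβ₁ : β < 1) :
    ∃ ε > 0, ∀ {α : ℝ} {A : Euc n → Euc n → Euc n} {b q : Euc n → ℝ} {g : ℝ → ℝ} {u : Euc n → ℝ},
      IsEntireSubsolution p C₁ C₂ α A b q g u →
      ∀ {r t T B κ : ℝ}, 0 ≤ r → 0 < t → 0 < T → 0 ≤ B →
      sphMax u (r + t) - sphMax u r ≤ T * t →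
      (∀ᵐ x ∂volume.restrict (Ann n r (r + t)), b x ≤ B ∧
        (sphMax u (r + t) - (1 + β) * (T * t) < u x → κ ≤ q x * g (u x))) →
      4 * (t * T ^ (α - p + 1) * B) ≤ C₁ → ε * (κ - B * T ^ α) * t ≤ T ^ (p - 1) := by
  obtain ⟨ε, hε, hbound⟩ := PerturbedSubsolution.exists_mul_le_rpow (Euc n) p C₁ C₂
    (by rw [finrank_euclideanSpace_fin]; omega) (half_pos hβ)
  refine ⟨ε / 2 ^ p, by positivity, fun {α A b q g u} h {r t T B κ} hr ht hT hB hM hae hsmall => ?_⟩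
  rcases le_or_gt (κ - B * T ^ α) 0 with hκ | hκ
  · exact (mul_nonpos_of_nonpos_of_nonneg (mul_nonpos_of_nonneg_of_nonpos (by positivity) hκ)
      ht.le).trans (by positivity)
  obtain ⟨x₀, hx₀, hux₀⟩ := exists_mem_sphere_eq_sphMax (by omega : n ≠ 0) h.contDiff.continuous
    (by positivity : 0 ≤ r + t / 2)
  rw [mem_sphere_zero_iff_norm] at hx₀
  have hheight : 2 * T * (t / 2) = T * t := by ring
  have hTt : 0 < T * t := by positivity
  have hβTt : β * (T * t) < T * t := mul_lt_of_lt_one_left hTt hβ₁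
  have hpert := h.divAddNonneg.perturbedSubsolution_subParaboloid (x₀ := x₀) (τ := 2 * T)
    (R := t / 2) (S := B * T ^ (α - p)) (K := κ - B * T ^ α)
    (m := sphMax u (r + t) - (1 + β) * (T * t)) h.contDiff h.one_lt_exponent h.coercivity_pos
    h.growth_nonneg (by positivity) (by positivity) hκ.le (by positivity)
    (by rw [Real.rpow_add_one hT.ne'] at hsmall; linarith)
    (fun x _ => h.coercive x) (fun x _ => h.growth x)
    (fun x hx => by
      linarith [h.le_sphMax_of_mem_closedBall hn (closedBall_subset_closedBall_zero hx₀ hx)])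
    (by
      filter_upwards [ae_restrict_of_ae_restrict_of_subset (ball_subset_Ann hx₀) hae] with x hx hux
      exact h.term_le hT hx.1 (hx.2 hux))
  have hcenter : sphMax u r ≤ u x₀ := hux₀ ▸ h.monotoneOn_sphMax hn hr
    (show 0 ≤ r + t / 2 by positivity) (by linarith)
  have hfinal := hbound (by positivity) (by positivity) hpert
    (by rw [subParaboloid_self, hheight]; linarith [mul_pos hβ hTt])
  rw [Real.mul_rpow zero_le_two hT.le, Real.rpow_sub_one two_ne_zero] at hfinal
  rw [div_mul_eq_mul_div, div_mul_eq_mul_div, div_le_iff₀ (by positivity)]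
  linarith

end EntireSubsolution

section Growth

lemma exists_nat_div_mem_Icc {X l : ℝ} (hl : 0 < l) (hlX : l ≤ X) :
    ∃ N : ℕ, N ≠ 0 ∧ X / N ∈ Icc (l / 2) l := by
  have hX : 0 < X := hl.trans_le hlX
  have hN : 0 < ⌈X / l⌉₊ := Nat.ceil_pos.2 (by positivity)
  have hlower := (div_le_iff₀ hl).1 (Nat.le_ceil (X / l))
  have hupper := mul_lt_mul_of_pos_right (Nat.ceil_lt_add_one (by positivity : 0 ≤ X / l)) hl
  rw [add_mul, div_mul_cancel₀ _ hl.ne'] at hupper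
  refine ⟨_, hN.ne', (le_div_iff₀ (by positivity)).2 ?_, (div_le_iff₀ (by positivity)).2 ?_⟩ <;>
    linarith

lemma exists_subinterval_sub_le (M : ℝ → ℝ) {r₁ r₂ : ℝ} (hr : r₁ ≤ r₂) {N : ℕ} (hN : N ≠ 0) :
    ∃ r, r₁ ≤ r ∧ r + (r₂ - r₁) / N ≤ r₂ ∧ M (r + (r₂ - r₁) / N) - M r ≤ (M r₂ - M r₁) / N := by
  set t := (r₂ - r₁) / N
  have : 0 ≤ t := div_nonneg (sub_nonneg.2 hr) N.cast_nonneg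
  have hNt : N * t = r₂ - r₁ := mul_div_cancel₀ _ (Nat.cast_ne_zero.2 hN)
  obtain ⟨i, hi, hMi⟩ := Finset.exists_le_of_sum_le (s := Finset.range N)
    (f := fun i : ℕ => M (r₁ + (i + 1 : ℕ) * t) - M (r₁ + i * t))
    (g := fun _ => (M r₂ - M r₁) / N) (Finset.nonempty_range_iff.2 hN) (by
      rw [Finset.sum_range_sub fun i : ℕ => M (r₁ + i * t), hNt]
      simp [mul_div_cancel₀, hN])
  have hiN : (i + 1 : ℝ) * t ≤ N * t := by
    gcongr
    exact_mod_cast Finset.mem_range.1 hi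
  refine ⟨r₁ + i * t, le_add_of_nonneg_right (by positivity), by linarith, ?_⟩
  rwa [Nat.cast_succ, add_one_mul, ← add_assoc] at hMi

lemma exists_subinterval_mul_mem_Icc (M : ℝ → ℝ) {r₁ r₂ y l : ℝ} (hr : r₁ < r₂) (hl : 0 < l)
    (hly : l ≤ (r₂ - r₁) * y) :
    ∃ r t, 0 < t ∧ r₁ ≤ r ∧ r + t ≤ r₂ ∧ M (r + t) - M r ≤ (M r₂ - M r₁) / (r₂ - r₁) * t ∧
      t * y ∈ Icc (l / 2) l := by
  obtain ⟨N, hN, hNl⟩ := exists_nat_div_mem_Icc hl hly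
  obtain ⟨r, hr₁r, hrr₂, hM⟩ := exists_subinterval_sub_le M hr.le hN
  have hρ : 0 < r₂ - r₁ := sub_pos.2 hr
  refine ⟨r, (r₂ - r₁) / N, by positivity, hr₁r, hrr₂, hM.trans_eq ?_, ?_⟩
  · field_simp
  · rwa [div_mul_eq_mul_div]

lemma sInf_image_Ioo_le {g : ℝ → ℝ} {a b t : ℝ} (hg : ContinuousWithinAt g (Ioo a b) t)
    (hbdd : BddBelow (g '' Ioo a b)) (ht : t ∈ Ioc a b) : sInf (g '' Ioo a b) ≤ g t := by
  have hclosure : t ∈ closure (Ioo a b) := by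
    rw [closure_Ioo (ht.1.trans_le ht.2).ne]
    exact Ioc_subset_Icc_self ht
  exact closure_minimal (fun _ hs => csInf_le hbdd hs) isClosed_Ici
    (hg.mem_closure_image hclosure)

variable {n : ℕ} {p C₁ C₂ α : ℝ} {A : Euc n → Euc n → Euc n} {b q : Euc n → ℝ} {g : ℝ → ℝ}
  {u : Euc n → ℝ} {r₁ r₂ : ℝ}

lemma Ann_subset_closedBall : Ann n r₁ r₂ ⊆ closedBall 0 r₂ :=
  fun _ hx => mem_closedBall_zero_iff.2 hx.2.le

lemma measurableSet_Ann : MeasurableSet (Ann n r₁ r₂) :=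
  (measurableSet_lt measurable_const measurable_norm).inter
    (measurableSet_lt measurable_norm measurable_const)

lemma Ann_mono {s₁ s₂ : ℝ} (h₁ : r₁ ≤ s₁) (h₂ : s₂ ≤ r₂) : Ann n s₁ s₂ ⊆ Ann n r₁ r₂ :=
  fun _ hx => ⟨h₁.trans_lt hx.1, hx.2.trans_le h₂⟩

lemma LocBdd.ae_le_essSup_Ann (hb : LocBdd b) :
    ∀ᵐ x ∂volume.restrict (Ann n r₁ r₂), b x ≤ essSup b (volume.restrict (Ann n r₁ r₂)) := by
  obtain ⟨B, hB⟩ := hb _ (isCompact_closedBall 0 r₂)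
  refine ae_le_essSup (isBoundedUnder_of_eventually_le (a := B) ?_)
  filter_upwards [ae_restrict_mem measurableSet_Ann] with x hx using hB x (Ann_subset_closedBall hx)

namespace IsEntireSubsolution

lemma ae_essInf_mul_sInf_le (h : IsEntireSubsolution p C₁ C₂ α A b q g u) (hn : 2 ≤ n) {a : ℝ}
    (ha : 0 ≤ a) :
    ∀ᵐ x ∂volume.restrict (Ann n r₁ r₂), a < u x →
      essInf q (volume.restrict (Ann n r₁ r₂)) * sInf (g '' Ioo a (sphMax u r₂)) ≤
        q x * g (u x) := by
  have hq : ∀ᵐ x ∂volume.restrict (Ann n r₁ r₂), essInf q (volume.restrict (Ann n r₁ r₂)) ≤ q x :=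
    ae_essInf_le (isBoundedUnder_of_eventually_ge (.of_forall h.weight_nonneg))
  have hIoo : Ioo a (sphMax u r₂) ⊆ Ici 0 := fun _ ht => ha.trans ht.1.le
  have hg₀ : ∀ y ∈ g '' Ioo a (sphMax u r₂), 0 ≤ y :=
    forall_mem_image.2 fun t ht => h.nonlinearity_nonneg t (hIoo ht)
  filter_upwards [hq, ae_restrict_mem measurableSet_Ann] with x hqx hx hax
  refine mul_le_mul hqx (sInf_image_Ioo_le ?_ ⟨0, hg₀⟩ ⟨hax, ?_⟩) (Real.sInf_nonneg hg₀)
    (h.weight_nonneg x)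
  · exact (h.continuousOn_nonlinearity _ (h.nonneg x)).mono hIoo
  · exact h.le_sphMax_of_mem_closedBall hn (Ann_subset_closedBall hx)

/-- The annulus is cut into shells of equal width, as wide as `exists_shell_bound` admits up to a
factor of two, and one on which `M(·; u)` grows least is selected. -/
theorem exists_growth_bound (hn : 2 ≤ n) (p : ℝ) {C₁ : ℝ} (hC₁ : 0 < C₁) (C₂ : ℝ) {β lam : ℝ}
    (hβ : 0 < β) (hβ₁ : β < 1) (hlam : 0 < lam) :
    ∃ C > 0, ∀ {α : ℝ} {A : Euc n → Euc n → Euc n} {b q : Euc n → ℝ} {g : ℝ → ℝ} {u : Euc n → ℝ},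
      IsEntireSubsolution p C₁ C₂ α A b q g u →
      ∀ {r₁ r₂ T B κ : ℝ}, 0 ≤ r₁ → r₁ < r₂ → 0 < T →
      sphMax u r₂ - sphMax u r₁ = T * (r₂ - r₁) →
      (∀ᵐ x ∂volume.restrict (Ann n r₁ r₂), b x ≤ B ∧
        (sphMax u r₁ - β * (sphMax u r₂ - sphMax u r₁) < u x → κ ≤ q x * g (u x))) →
      lam ≤ (r₂ - r₁) * T ^ (α - p + 1) * B → C * κ ≤ T ^ α * B := by
  obtain ⟨ε, hε, hshell⟩ := exists_shell_bound hn p C₁ C₂ hβ hβ₁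
  set l := min (lam * β / 2) (C₁ / 4)
  have hl : 0 < l := by positivity
  have hlβ : l ≤ lam * β / 2 := min_le_left _ _
  have hlC₁ : l ≤ C₁ / 4 := min_le_right _ _
  refine ⟨ε * l / (2 + ε * l), by positivity,
    fun {α A b q g u} h {r₁ r₂ T B κ} hr₁ hr hT hM hae hX => ?_⟩
  have hρ : 0 < r₂ - r₁ := sub_pos.2 hr
  have hB : 0 < B := pos_of_mul_pos_right (hlam.trans_le hX) (by positivity)
  rw [mul_assoc] at hX
  obtain ⟨r, t, ht, hr₁r, hrr₂, hMr, hlt, htl⟩ := exists_subinterval_mul_mem_Icc (sphMax u) hr hl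
    (hlβ.trans (le_trans (by nlinarith) hX))
  rw [hM, mul_div_cancel_right₀ _ hρ.ne'] at hMr
  have hthin : 2 * t ≤ β * (r₂ - r₁) := by
    refine le_of_mul_le_mul_right ?_ (show 0 < T ^ (α - p + 1) * B by positivity)
    linarith [mul_le_mul_of_nonneg_left hX hβ.le]
  have hmono : sphMax u r₁ ≤ sphMax u (r + t) :=
    h.monotoneOn_sphMax hn hr₁ (show 0 ≤ r + t by linarith) (by linarith)
  have hslow := hshell h (κ := κ) (hr₁.trans hr₁r) ht hT hB.le hMr (by
    filter_upwards [ae_restrict_of_ae_restrict_of_subset (Ann_mono hr₁r hrr₂) hae] with x hx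
    refine ⟨hx.1, fun hux => hx.2 (lt_of_le_of_lt ?_ hux)⟩
    rw [hM]
    nlinarith [mul_le_mul_of_nonneg_left hthin hT.le, mul_pos hT ht]) (by linarith)
  have hpow : T ^ (p - 1) * (t * (T ^ (α - p + 1) * B)) = T ^ α * B * t := by
    rw [show T ^ α = T ^ (p - 1) * T ^ (α - p + 1) by rw [← Real.rpow_add hT]; ring_nf]
    ring
  rw [div_mul_eq_mul_div, div_le_iff₀ (by positivity)]
  refine le_of_mul_le_mul_right ?_ ht
  linarith [mul_le_mul_of_nonneg_right hslow (half_pos hl).le,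
    mul_le_mul_of_nonneg_left hlt (Real.rpow_nonneg hT.le (p - 1))]

end IsEntireSubsolution

end Growth

/-- Lemma 3.2: bound from below for the growth of `M(r;u)` when the `b`-term is large. -/
theorem stmt_5 (n : ℕ) (hn : 2 ≤ n) (p C₁ C₂ α : ℝ) (hp : 1 < p)
    (hC₁ : 0 < C₁) (hC₂ : 0 < C₂) (hα₁ : p - 1 ≤ α) (hα₂ : α ≤ p)
    (β lam : ℝ) (hβ0 : 0 < β) (hβ1 : β < 1) (hlam : 0 < lam) :
    ∃ C : ℝ, 0 < C ∧
      ∀ (A : Euc n → Euc n → Euc n), StructCond A p C₁ C₂ →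
      ∀ (b : Euc n → ℝ), Measurable b → (∀ x, 0 ≤ b x) → LocBdd b →
      ∀ (q : Euc n → ℝ), Measurable q → (∀ x, 0 ≤ q x) → LocBdd q →
      ∀ (g : ℝ → ℝ), ContinuousOn g (Set.Ici 0) → (∀ t ∈ Set.Ici (0 : ℝ), 0 ≤ g t) →
        (∀ t : ℝ, 0 < t → 0 < g t) →
      ∀ u : Euc n → ℝ, ContDiff ℝ 1 u → (∀ x, 0 ≤ u x) →
        IsWeakSol A b α (fun x => q x * g (u x)) Set.univ u →
      ∀ r₁ r₂ : ℝ, 0 < r₁ → r₁ < r₂ →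
        sphMax u r₁ < sphMax u r₂ → β * sphMax u r₂ ≤ sphMax u r₁ →
        lam ≤ (sphMax u r₂ - sphMax u r₁) ^ (α - p + 1) * (r₂ - r₁) ^ (p - α) *
            essSup b (volume.restrict (Ann n r₁ r₂)) →
        C * (r₂ - r₁) ^ α * essInf q (volume.restrict (Ann n r₁ r₂)) *
            sInf (g '' Set.Ioo (β * sphMax u r₁) (sphMax u r₂)) ≤
          (sphMax u r₂ - sphMax u r₁) ^ α * essSup b (volume.restrict (Ann n r₁ r₂)) := by
  obtain ⟨C, hC, hgrowth⟩ :=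
    IsEntireSubsolution.exists_growth_bound hn p hC₁ C₂ hβ0 hβ1 hlam
  refine ⟨C, hC, fun A hA b hbm hb₀ hb q hqm hq₀ hq g hg hg₀ _ u hu hu₀ hsol r₁ r₂ hr₁ hr hM hβM
    hlarge => ?_⟩
  have h : IsEntireSubsolution p C₁ C₂ α A b q g u :=
    ⟨hp, hC₁, hC₂.le, hα₁, hα₂, hA, hbm, hb₀, hb, hqm, hq₀, hq, hg, hg₀, hu, hu₀, hsol⟩
  have hρ : 0 < r₂ - r₁ := sub_pos.2 hr
  obtain ⟨T, hT, hMT⟩ : ∃ T > 0, sphMax u r₂ - sphMax u r₁ = T * (r₂ - r₁) :=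
    ⟨_, div_pos (sub_pos.2 hM) hρ, (div_mul_cancel₀ _ hρ.ne').symm⟩
  have hsource := hgrowth h hr₁.le hr hT hMT (by
    filter_upwards [hb.ae_le_essSup_Ann, h.ae_essInf_mul_sInf_le hn
      (mul_nonneg hβ0.le (sphMax_nonneg hu₀ r₁))] with x hbx hqx
    exact ⟨hbx, fun hux => hqx (lt_of_le_of_lt (by linarith) hux)⟩) (by
    rwa [hMT, Real.mul_rpow hT.le hρ.le, mul_assoc (T ^ _), ← Real.rpow_add hρ,
      show α - p + 1 + (p - α) = 1 by ring, Real.rpow_one, mul_comm (T ^ _)] at hlarge)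
  rw [hMT, Real.mul_rpow hT.le hρ.le]
  linarith [mul_le_mul_of_nonneg_right hsource (Real.rpow_nonneg hρ.le α)]
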